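/- arXiv:2312.15995 — 3 statements merged into one kernel-verified Lean document; each statement's English description precedes it below -/
import Mathlib

section
/- Theorem 1 (eigenvalues of kernel matrices, upper bound). There exist absolute constants c, c₂ > 0 with the following property. Assume β_k < ∞ for all k, that the eigenvalues are in non-increasing order λ_1 ≥ λ_2 ≥ …, and the regularity assumption holds. Then for every n ≥ 1 and every k ∈ {1,…,n}, with probability at least 1 − 4·(r_k/k⁴)·exp(−(c/β_k)·(n/r_k)) − 2·exp(−(c/β_k)·max(n/k, log k)) over X = (x_1,…,x_n) drawn i.i.d. from μ, the k-th largest eigenvalue of the normalized kernel matrix satisfies μ_k((1/n)K) ≤ c₂·β_k·( (1 + k·log(k)/n)·λ_k + log(k+1)·tr(Σ_{>k})/n ). -/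
open MeasureTheory Matrix Filter

noncomputable section

namespace KRRPaper

universe u

variable {𝒳 : Type u}

/-- `tr(Σ_{>k})`, with 0-based indexing (Lean index `i` = paper index `i+1`). -/
def trTail (lam : ℕ → ℝ) (k : ℕ) : ℝ := ∑' i : ℕ, lam (k + i)

/-- `tr(Σ_{>k}²)` -/
def trTailSq (lam : ℕ → ℝ) (k : ℕ) : ℝ := ∑' i : ℕ, (lam (k + i)) ^ 2

/-- `‖Σ_{>k}‖ = sup_{i>k} λ_i` -/
def opTail (lam : ℕ → ℝ) (k : ℕ) : ℝ := ⨆ i : ℕ, lam (k + i)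

/-- effective rank `r_k` -/
def rEff (lam : ℕ → ℝ) (k : ℕ) : ℝ := trTail lam k / opTail lam k

/-- effective rank `R_k` -/
def REff (lam : ℕ → ℝ) (k : ℕ) : ℝ := (trTail lam k) ^ 2 / trTailSq lam k

/-- the function whose essential supremum defines `β_k` -/
def betaF (lam : ℕ → ℝ) (ψ : ℕ → 𝒳 → ℝ) (k : ℕ) (x : 𝒳) : ℝ :=
  max (max ((∑ i ∈ Finset.range k, (ψ i x) ^ 2) / k)
        ((∑' i : ℕ, lam (k + i) * (ψ (k + i) x) ^ 2) / trTail lam k))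
      ((∑' i : ℕ, (lam (k + i)) ^ 2 * (ψ (k + i) x) ^ 2) / trTailSq lam k)

/-- `β_k`, the essential supremum of `betaF` -/
def betaQ [MeasurableSpace 𝒳] (μ : Measure 𝒳) (lam : ℕ → ℝ) (ψ : ℕ → 𝒳 → ℝ) (k : ℕ) : ℝ :=
  essSup (betaF lam ψ k) μ

def alphaF (lam : ℕ → ℝ) (ψ : ℕ → 𝒳 → ℝ) (k : ℕ) (x : 𝒳) : ℝ :=
  (∑' i : ℕ, lam (k + i) * (ψ (k + i) x) ^ 2) / trTail lam k

/-- `α_k`, the essential infimum of `alphaF` -/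
def alphaQ [MeasurableSpace 𝒳] (μ : Measure 𝒳) (lam : ℕ → ℝ) (ψ : ℕ → 𝒳 → ℝ) (k : ℕ) : ℝ :=
  essInf (alphaF lam ψ k) μ

/-- the hypothesis `β_k < ∞` -/
def BetaFinite [MeasurableSpace 𝒳] (μ : Measure 𝒳) (lam : ℕ → ℝ) (ψ : ℕ → 𝒳 → ℝ) (k : ℕ) : Prop :=
  ∃ C : ℝ, ∀ᵐ x ∂μ, betaF lam ψ k x ≤ C

/-- `(ψ_i)` is an orthonormal family in `L²(μ)` -/
def OrthonormalFamily [MeasurableSpace 𝒳] (μ : Measure 𝒳) (ψ : ℕ → 𝒳 → ℝ) : Prop :=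
  (∀ i, MemLp (ψ i) 2 μ) ∧
    ∀ i j, ∫ x, ψ i x * ψ j x ∂μ = if i = j then (1 : ℝ) else 0

/-- the regularity assumption -/
def RegularityAssumption [MeasurableSpace 𝒳] (μ : Measure 𝒳) (lam : ℕ → ℝ)
    (ψ : ℕ → 𝒳 → ℝ) : Prop :=
  (∃ N : ℕ, ∀ i, N ≤ i → lam i = 0) ∨
    ∃ ks : ℕ → ℕ, StrictMono ks ∧
      Tendsto (fun i => betaQ μ lam ψ (ks i) * trTail lam (ks i)) atTop (nhds 0)

/-- the kernel matrix `K` -/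
def kerMat (lam : ℕ → ℝ) (ψ : ℕ → 𝒳 → ℝ) {n : ℕ} (X : Fin n → 𝒳) :
    Matrix (Fin n) (Fin n) ℝ :=
  Matrix.of fun j l => ∑' i : ℕ, lam i * ψ i (X j) * ψ i (X l)

/-- the tail kernel matrix `K_{>k}` -/
def kerMatGT (lam : ℕ → ℝ) (ψ : ℕ → 𝒳 → ℝ) (k : ℕ) {n : ℕ} (X : Fin n → 𝒳) :
    Matrix (Fin n) (Fin n) ℝ :=
  Matrix.of fun j l => ∑' i : ℕ, lam (k + i) * ψ (k + i) (X j) * ψ (k + i) (X l)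

/-- the matrix `M` with entries `∑ᵢ λᵢ² ψᵢ(x_j) ψᵢ(x_l)` -/
def sqKerMat (lam : ℕ → ℝ) (ψ : ℕ → 𝒳 → ℝ) {n : ℕ} (X : Fin n → 𝒳) :
    Matrix (Fin n) (Fin n) ℝ :=
  Matrix.of fun j l => ∑' i : ℕ, (lam i) ^ 2 * ψ i (X j) * ψ i (X l)

/-- `ψ_{≤k}(X)`, the `n × k` design matrix -/
def psiMat (ψ : ℕ → 𝒳 → ℝ) (k : ℕ) {n : ℕ} (X : Fin n → 𝒳) :
    Matrix (Fin n) (Fin k) ℝ :=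
  Matrix.of fun j i => ψ (i : ℕ) (X j)

/-- `eigval M j` is the `j`-th largest eigenvalue (`j` is 1-based) of a real symmetric
matrix `M`; junk value `0` if `M` is not symmetric or `j` is out of range. -/
def eigval {n : ℕ} (M : Matrix (Fin n) (Fin n) ℝ) (j : ℕ) : ℝ := by
  classical
  exact if h : M.IsHermitian then
    if hj : j - 1 < n then
      (h.eigenvalues ∘ ⇑(Tuple.sort h.eigenvalues)) (Fin.rev ⟨j - 1, hj⟩)
    else 0
  else 0

/-- `A = K + nγ_n I` -/
def ridgeMat (lam : ℕ → ℝ) (ψ : ℕ → 𝒳 → ℝ) {n : ℕ} (X : Fin n → 𝒳) (γ : ℝ) :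
    Matrix (Fin n) (Fin n) ℝ :=
  kerMat lam ψ X + ((n : ℝ) * γ) • (1 : Matrix (Fin n) (Fin n) ℝ)

/-- the variance `V = σ_ε² tr(A⁻¹ M A⁻¹)` of kernel ridge regression -/
def varKRR (lam : ℕ → ℝ) (ψ : ℕ → 𝒳 → ℝ) {n : ℕ} (X : Fin n → 𝒳) (γ σ : ℝ) : ℝ :=
  σ ^ 2 * ((ridgeMat lam ψ X γ)⁻¹ * sqKerMat lam ψ X * (ridgeMat lam ψ X γ)⁻¹).trace

/-- the KRR coefficient vector `θ̂(y)` -/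
def thetaHat (lam : ℕ → ℝ) (ψ : ℕ → 𝒳 → ℝ) {n : ℕ} (X : Fin n → 𝒳) (γ : ℝ)
    (y : Fin n → ℝ) (i : ℕ) : ℝ :=
  Real.sqrt (lam i) * ∑ j, ψ i (X j) * ((ridgeMat lam ψ X γ)⁻¹ *ᵥ y) j

/-- the noiseless labels `φ(X)θ*` -/
def labels (lam : ℕ → ℝ) (ψ : ℕ → 𝒳 → ℝ) {n : ℕ} (X : Fin n → 𝒳) (θ : ℕ → ℝ) :
    Fin n → ℝ :=
  fun j => ∑' i : ℕ, Real.sqrt (lam i) * ψ i (X j) * θ i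

/-- the bias `B` of kernel ridge regression -/
def biasKRR (lam : ℕ → ℝ) (ψ : ℕ → 𝒳 → ℝ) {n : ℕ} (X : Fin n → 𝒳) (γ : ℝ) (θ : ℕ → ℝ) : ℝ :=
  ∑' i : ℕ, lam i * (thetaHat lam ψ X γ (labels lam ψ X θ) i - θ i) ^ 2

/-- the concentration coefficient `ρ_{k,n}` -/
def rhoCoef (lam : ℕ → ℝ) (ψ : ℕ → 𝒳 → ℝ) (k : ℕ) {n : ℕ} (X : Fin n → 𝒳) (γ : ℝ) : ℝ :=
  (opTail lam k + eigval ((n : ℝ)⁻¹ • kerMatGT lam ψ k X) 1 + γ) /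
    (eigval ((n : ℝ)⁻¹ • kerMatGT lam ψ k X) n + γ)

/-- the i.i.d. sample measure `μ^{⊗n}` on `Fin n → 𝒳` -/
def iid [MeasurableSpace 𝒳] (μ : Measure 𝒳) (n : ℕ) : Measure (Fin n → 𝒳) :=
  Measure.pi fun _ => μ


/-- `U diag(f) Uᵀ` -/
def fc {N : ℕ} (U : Matrix (Fin N) (Fin N) ℝ) (f : Fin N → ℝ) : Matrix (Fin N) (Fin N) ℝ :=
  U * Matrix.diagonal f * Uᵀ

lemma fc_mul {N : ℕ} {U : Matrix (Fin N) (Fin N) ℝ} (hU : Uᵀ * U = 1) (f g : Fin N → ℝ) :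
    fc U f * fc U g = fc U (fun l => f l * g l) := by
  unfold fc
  calc U * diagonal f * Uᵀ * (U * diagonal g * Uᵀ)
      = U * diagonal f * (Uᵀ * U) * diagonal g * Uᵀ := by simp only [Matrix.mul_assoc]
    _ = _ := by rw [hU, Matrix.mul_one, Matrix.mul_assoc U, diagonal_mul_diagonal]

lemma fc_one {N : ℕ} {U : Matrix (Fin N) (Fin N) ℝ} (hU : U * Uᵀ = 1) :
    fc U (fun _ => 1) = 1 := by
  unfold fc
  rw [show (diagonal fun _ : Fin N => (1 : ℝ)) = 1 from diagonal_one, Matrix.mul_one, hU]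

lemma fc_add {N : ℕ} (U : Matrix (Fin N) (Fin N) ℝ) (f g : Fin N → ℝ) :
    fc U f + fc U g = fc U (fun l => f l + g l) := by
  unfold fc
  rw [← diagonal_add, Matrix.mul_add, Matrix.add_mul]

lemma fc_pow {N : ℕ} {U : Matrix (Fin N) (Fin N) ℝ} (hU : Uᵀ * U = 1) (hU' : U * Uᵀ = 1)
    (f : Fin N → ℝ) (p : ℕ) : fc U f ^ p = fc U (fun l => f l ^ p) := by
  induction p with
  | zero => simp [fc_one hU']
  | succ p ih => rw [pow_succ, ih, fc_mul hU]; simp [pow_succ]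

lemma fc_entry {N : ℕ} (U : Matrix (Fin N) (Fin N) ℝ) (f : Fin N → ℝ) (i j : Fin N) :
    fc U f i j = ∑ l, f l * (U i l * U j l) := by
  unfold fc
  rw [Matrix.mul_apply]
  refine Finset.sum_congr rfl fun l _ => ?_
  rw [Matrix.mul_diagonal, transpose_apply]; ring

lemma fc_quad {N : ℕ} (U : Matrix (Fin N) (Fin N) ℝ) (f : Fin N → ℝ) (v : Fin N → ℝ) :
    v ⬝ᵥ (fc U f *ᵥ v) = ∑ l, f l * ((Uᵀ *ᵥ v) l) ^ 2 := by
  unfold fc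
  rw [← Matrix.mulVec_mulVec, ← Matrix.mulVec_mulVec, Matrix.dotProduct_mulVec,
    ← Matrix.mulVec_transpose, dotProduct]
  refine Finset.sum_congr rfl fun l _ => ?_
  rw [mulVec_diagonal]; ring

lemma fc_trace {N : ℕ} {U : Matrix (Fin N) (Fin N) ℝ} (hU : Uᵀ * U = 1) (f : Fin N → ℝ) :
    (fc U f).trace = ∑ l, f l := by
  unfold fc
  rw [Matrix.trace_mul_comm, ← Matrix.mul_assoc, hU, Matrix.one_mul, trace_diagonal]

lemma exists_fc {N : ℕ} {S : Matrix (Fin N) (Fin N) ℝ} (hS : S.PosSemidef) :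
    ∃ (U : Matrix (Fin N) (Fin N) ℝ) (σ : Fin N → ℝ), Uᵀ * U = 1 ∧ U * Uᵀ = 1 ∧
      (∀ l, 0 ≤ σ l) ∧ S = fc U σ := by
  refine ⟨hS.1.eigenvectorUnitary, hS.1.eigenvalues, ?_, ?_, hS.eigenvalues_nonneg, ?_⟩
  · have := Unitary.coe_star_mul_self hS.1.eigenvectorUnitary
    rwa [star_eq_conjTranspose, conjTranspose_eq_transpose_of_trivial] at this
  · have := Unitary.coe_mul_star_self hS.1.eigenvectorUnitary
    rwa [Unitary.coe_star, star_eq_conjTranspose, conjTranspose_eq_transpose_of_trivial] at this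
  · have := hS.1.spectral_theorem
    rw [Unitary.conjStarAlgAut_apply, star_eq_conjTranspose,
      conjTranspose_eq_transpose_of_trivial] at this
    exact this

/-- weighted Chebyshev sum inequality -/
lemma cheb {N : ℕ} (w f g : Fin N → ℝ) (hw : ∀ l, 0 ≤ w l)
    (h : ∀ i j, 0 ≤ (f i - f j) * (g i - g j)) :
    (∑ l, f l * w l) * (∑ l, g l * w l) ≤ (∑ l, w l) * (∑ l, f l * g l * w l) := by
  have h1 : 0 ≤ ∑ i, ∑ j, w i * w j * ((f i - f j) * (g i - g j)) :=
    Finset.sum_nonneg fun i _ => Finset.sum_nonneg fun j _ =>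
      mul_nonneg (mul_nonneg (hw i) (hw j)) (h i j)
  have e1 : ∑ i, ∑ j, w i * w j * ((f i - f j) * (g i - g j))
      = (∑ i, ∑ j, f i * g i * w i * w j) + (∑ i, ∑ j, w i * (f j * g j * w j))
        - (∑ i, ∑ j, (f i * w i) * (g j * w j)) - (∑ i, ∑ j, (g i * w i) * (f j * w j)) := by
    simp only [← Finset.sum_add_distrib, ← Finset.sum_sub_distrib]
    refine Finset.sum_congr rfl fun i _ => Finset.sum_congr rfl fun j _ => ?_
    ring
  rw [e1] at h1
  simp only [← Finset.sum_mul_sum] at h1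
  nlinarith [h1]

/-- key comparison: `vᵀ Sⁱ (S+vvᵀ)ʲ v ≤ vᵀ Sⁱ (S+1)ʲ v` when `‖v‖ ≤ 1`. -/
lemma key_cmp {N : ℕ} {S : Matrix (Fin N) (Fin N) ℝ} (hS : S.PosSemidef) (v : Fin N → ℝ)
    (hv : v ⬝ᵥ v ≤ 1) (j i : ℕ) :
    v ⬝ᵥ ((S ^ i * (S + vecMulVec v v) ^ j) *ᵥ v) ≤ v ⬝ᵥ ((S ^ i * (S + 1) ^ j) *ᵥ v) := by
  obtain ⟨U, σ, hU, hU', hσ, rfl⟩ := exists_fc hS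
  have hb : ∀ i j : ℕ, fc U σ ^ i * (fc U σ + 1) ^ j = fc U (fun l => σ l ^ i * (σ l + 1) ^ j) := by
    intro i j
    rw [← fc_one hU', fc_add, fc_pow hU hU', fc_pow hU hU', fc_mul hU]
  induction j generalizing i with
  | zero => simp
  | succ j ih =>
    set S := fc U σ with hSd
    have e1 : v ⬝ᵥ ((S ^ i * (S + vecMulVec v v) ^ (j + 1)) *ᵥ v)
        = v ⬝ᵥ ((S ^ (i + 1) * (S + vecMulVec v v) ^ j) *ᵥ v)
          + (v ⬝ᵥ (S ^ i *ᵥ v)) * (v ⬝ᵥ ((S ^ 0 * (S + vecMulVec v v) ^ j) *ᵥ v)) := by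
      rw [pow_succ' (S + vecMulVec v v), add_mul, mul_add, Matrix.add_mulVec, dotProduct_add,
        pow_succ, Matrix.mul_assoc, pow_zero, Matrix.one_mul]
      congr 1
      rw [← Matrix.mulVec_mulVec, ← Matrix.mulVec_mulVec, vecMulVec_mulVec]
      simp [Matrix.mulVec_smul, dotProduct_smul, mul_comm]
    have hs0 : 0 ≤ v ⬝ᵥ (S ^ i *ᵥ v) := by
      rw [hSd, fc_pow hU hU', fc_quad]
      exact Finset.sum_nonneg fun l _ => mul_nonneg (pow_nonneg (hσ l) _) (sq_nonneg _)
    have hch : (v ⬝ᵥ (S ^ i *ᵥ v)) * (v ⬝ᵥ ((S ^ 0 * (S + 1) ^ j) *ᵥ v))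
        ≤ (v ⬝ᵥ v) * v ⬝ᵥ ((S ^ i * (S + 1) ^ j) *ᵥ v) := by
      have hvv : v ⬝ᵥ v = ∑ l, ((Uᵀ *ᵥ v) l) ^ 2 := by
        have := fc_quad U (fun _ => 1) v
        rw [fc_one hU'] at this
        simpa using this
      rw [hvv, hb, hb, hSd, fc_pow hU hU', fc_quad, fc_quad, fc_quad]
      simp only [pow_zero, one_mul]
      refine cheb _ _ _ (fun l => sq_nonneg _) fun a b => ?_
      rcases le_total (σ a) (σ b) with h | h
      · refine mul_nonneg_of_nonpos_of_nonpos ?_ ?_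
        · exact sub_nonpos.2 (pow_le_pow_left₀ (hσ a) h _)
        · exact sub_nonpos.2 (pow_le_pow_left₀ (by linarith [hσ a]) (by linarith) _)
      · refine mul_nonneg ?_ ?_
        · exact sub_nonneg.2 (pow_le_pow_left₀ (hσ b) h _)
        · exact sub_nonneg.2 (pow_le_pow_left₀ (by linarith [hσ b]) (by linarith) _)
    have hb0 : 0 ≤ v ⬝ᵥ ((S ^ i * (S + 1) ^ j) *ᵥ v) := by
      rw [hb, fc_quad]
      exact Finset.sum_nonneg fun l _ => mul_nonneg
        (mul_nonneg (pow_nonneg (hσ l) _) (pow_nonneg (by linarith [hσ l]) _)) (sq_nonneg _)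
    have e2 : v ⬝ᵥ ((S ^ i * (S + 1) ^ (j + 1)) *ᵥ v)
        = v ⬝ᵥ ((S ^ (i + 1) * (S + 1) ^ j) *ᵥ v) + v ⬝ᵥ ((S ^ i * (S + 1) ^ j) *ᵥ v) := by
      rw [pow_succ' (S + 1), add_mul, mul_add, Matrix.add_mulVec, dotProduct_add,
        pow_succ, Matrix.mul_assoc, Matrix.one_mul]
    rw [e1, e2]
    have h1 := ih (i + 1)
    have h2 := mul_le_mul_of_nonneg_left (ih 0) hs0
    have h3 := mul_le_mul_of_nonneg_right hv hb0
    linarith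

lemma trace_vec {N : ℕ} (A B : Matrix (Fin N) (Fin N) ℝ) (v : Fin N → ℝ) :
    (A * vecMulVec v v * B).trace = v ⬝ᵥ ((B * A) *ᵥ v) := by
  rw [Matrix.trace_mul_comm, ← Matrix.mul_assoc, mul_vecMulVec, trace_vecMulVec, dotProduct_comm]

lemma trace_pow_step {N : ℕ} {S : Matrix (Fin N) (Fin N) ℝ} (hS : S.PosSemidef) (v : Fin N → ℝ)
    (hv : v ⬝ᵥ v ≤ 1) (p : ℕ) :
    ((S + vecMulVec v v) ^ p).trace ≤ (S ^ p).trace + v ⬝ᵥ (((S + 1) ^ p - S ^ p) *ᵥ v) := by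
  have h : ∀ p : ℕ, ∀ q : ℕ, ((S + vecMulVec v v) ^ p * S ^ q).trace + v ⬝ᵥ ((S ^ (p+q)) *ᵥ v) ≤
      (S ^ (p + q)).trace + v ⬝ᵥ ((S ^ q * (S + 1) ^ p) *ᵥ v) := by
    intro p
    induction p with
    | zero => intro q; simp
    | succ p ih =>
      intro q
      have h1 := ih (q + 1)
      have h2 := key_cmp hS v hv p q
      have e1 : ((S + vecMulVec v v) ^ (p + 1) * S ^ q).trace =
          ((S + vecMulVec v v) ^ p * S ^ (q + 1)).trace
          + v ⬝ᵥ ((S ^ q * (S + vecMulVec v v) ^ p) *ᵥ v) := by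
        rw [pow_succ, mul_add, add_mul, trace_add, trace_vec, Matrix.mul_assoc, ← pow_succ']
      have e2 : v ⬝ᵥ ((S ^ q * (S + 1) ^ (p + 1)) *ᵥ v)
          = v ⬝ᵥ ((S ^ (q + 1) * (S + 1) ^ p) *ᵥ v) + v ⬝ᵥ ((S ^ q * (S + 1) ^ p) *ᵥ v) := by
        rw [pow_succ' (S + 1), add_mul, mul_add, Matrix.add_mulVec, dotProduct_add,
          pow_succ, Matrix.mul_assoc, Matrix.one_mul]
      have e3 : p + 1 + q = p + (q + 1) := by ring
      rw [e1, e2, e3]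
      linarith
  have := h p 0
  simp only [pow_zero, Matrix.mul_one, Matrix.one_mul, add_zero] at this
  rw [Matrix.sub_mulVec, dotProduct_sub]
  linarith

/-- truncated exponential -/
def eP (P : ℕ) (x : ℝ) : ℝ := ∑ p ∈ Finset.range P, x ^ (p + 1) / (p + 1).factorial

lemma eP_step (P : ℕ) (x : ℝ) (hx : 0 ≤ x) : eP P (x + 1) - eP P x ≤ 2 * (1 + eP P x) := by
  have key : ∀ y : ℝ, 1 + eP P y = ∑ p ∈ Finset.range (P + 1), y ^ p / p.factorial := by
    intro y
    rw [Finset.sum_range_succ', eP]; simp [add_comm]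
  have h1 : ∑ p ∈ Finset.range (P + 1), (x + 1) ^ p / p.factorial
      ≤ (∑ p ∈ Finset.range (P + 1), x ^ p / p.factorial) *
        ∑ q ∈ Finset.range (P + 1), (1 : ℝ) ^ q / q.factorial := by
    have e : ∀ p ∈ Finset.range (P + 1), (x + 1) ^ p / p.factorial =
        ∑ m ∈ Finset.range (p + 1), x ^ m / m.factorial * ((1 : ℝ) ^ (p - m) / (p - m).factorial) := by
      intro p _
      rw [add_pow, Finset.sum_div]
      refine Finset.sum_congr rfl fun m hm => ?_
      have hm' : m ≤ p := by simpa [Nat.lt_succ_iff] using hm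
      rw [Nat.cast_choose ℝ hm']
      have := Nat.factorial_ne_zero p
      field_simp
    rw [Finset.sum_congr rfl e, Finset.sum_mul_sum]
    rw [Finset.sum_range_diag_flip (P + 1)
      (fun m q => x ^ m / m.factorial * ((1 : ℝ) ^ q / q.factorial))]
    refine Finset.sum_le_sum fun m _ => ?_
    refine Finset.sum_le_sum_of_subset_of_nonneg ?_ fun q _ _ => by positivity
    exact Finset.range_subset_range.2 (by omega)
  have h2 : ∑ q ∈ Finset.range (P + 1), (1 : ℝ) ^ q / q.factorial ≤ 3 := by
    have := Real.sum_le_exp_of_nonneg (zero_le_one) (P + 1)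
    have := Real.exp_one_lt_d9
    linarith
  have h3 : 0 ≤ ∑ p ∈ Finset.range (P + 1), x ^ p / p.factorial :=
    Finset.sum_nonneg fun _ _ => by positivity
  rw [← key, ← key] at h1
  rw [← key] at h3
  nlinarith

/-- truncated trace exponential -/
def FP {N : ℕ} (P : ℕ) (S : Matrix (Fin N) (Fin N) ℝ) : ℝ :=
  ∑ p ∈ Finset.range P, (S ^ (p + 1)).trace / (p + 1).factorial

def MP {N : ℕ} (P : ℕ) (S : Matrix (Fin N) (Fin N) ℝ) : Matrix (Fin N) (Fin N) ℝ :=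
  ∑ p ∈ Finset.range P, (((p + 1).factorial : ℝ)⁻¹) • ((S + 1) ^ (p + 1) - S ^ (p + 1))

lemma FP_step {N : ℕ} (P : ℕ) {S : Matrix (Fin N) (Fin N) ℝ} (hS : S.PosSemidef) (v : Fin N → ℝ)
    (hv : v ⬝ᵥ v ≤ 1) :
    FP P (S + vecMulVec v v) ≤ FP P S + v ⬝ᵥ (MP P S *ᵥ v) := by
  have e : v ⬝ᵥ (MP P S *ᵥ v) = ∑ p ∈ Finset.range P,
      v ⬝ᵥ (((S + 1) ^ (p + 1) - S ^ (p + 1)) *ᵥ v) / (p + 1).factorial := by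
    unfold MP
    rw [Matrix.sum_mulVec, dotProduct_sum]
    refine Finset.sum_congr rfl fun p _ => ?_
    rw [Matrix.smul_mulVec, dotProduct_smul, smul_eq_mul, div_eq_inv_mul]
  rw [e, FP, FP, ← Finset.sum_add_distrib]
  refine Finset.sum_le_sum fun p _ => ?_
  rw [← add_div]
  exact div_le_div_of_nonneg_right (trace_pow_step hS v hv _) (by positivity)

lemma FP_eq {N : ℕ} (P : ℕ) {U : Matrix (Fin N) (Fin N) ℝ} (hU : Uᵀ * U = 1) (hU' : U * Uᵀ = 1)
    (σ : Fin N → ℝ) : FP P (fc U σ) = ∑ l, eP P (σ l) := by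
  unfold FP eP
  rw [Finset.sum_comm]
  refine Finset.sum_congr rfl fun p _ => ?_
  rw [fc_pow hU hU', fc_trace hU, Finset.sum_div]

lemma eP_nonneg (P : ℕ) {x : ℝ} (hx : 0 ≤ x) : 0 ≤ eP P x :=
  Finset.sum_nonneg fun _ _ => by positivity

lemma FP_nonneg {N : ℕ} (P : ℕ) {S : Matrix (Fin N) (Fin N) ℝ} (hS : S.PosSemidef) :
    0 ≤ FP P S := by
  obtain ⟨U, σ, hU, hU', hσ, rfl⟩ := exists_fc hS
  rw [FP_eq P hU hU']
  exact Finset.sum_nonneg fun l _ => eP_nonneg P (hσ l)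

lemma MP_diag {N : ℕ} (P : ℕ) {S : Matrix (Fin N) (Fin N) ℝ} (hS : S.PosSemidef)
    (w : Fin N → ℝ) (W : ℝ) (hw : ∀ i, 0 ≤ w i) (hW : ∀ i, w i ≤ W) :
    ∑ i, w i * MP P S i i ≤ 2 * (∑ i, w i) + 2 * W * FP P S := by
  obtain ⟨U, σ, hU, hU', hσ, rfl⟩ := exists_fc hS
  rw [FP_eq P hU hU']
  have e : ∀ i, MP P (fc U σ) i i = ∑ l, (eP P (σ l + 1) - eP P (σ l)) * (U i l * U i l) := by
    intro i
    unfold MP eP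
    simp only [Matrix.sum_apply, Matrix.smul_apply, Matrix.sub_apply, ← Finset.sum_sub_distrib,
      Finset.sum_mul]
    rw [Finset.sum_comm]
    refine Finset.sum_congr rfl fun p _ => ?_
    rw [← fc_one hU', fc_add, fc_pow hU hU', fc_pow hU hU', fc_entry, fc_entry,
      ← Finset.sum_sub_distrib, Finset.smul_sum]
    refine Finset.sum_congr rfl fun l _ => ?_
    simp only [smul_eq_mul]; ring
  have hrow : ∀ i, ∑ l, U i l * U i l = 1 := by
    intro i
    have := congrFun (congrFun hU' i) i
    simpa [Matrix.mul_apply] using this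
  have hcol : ∀ l, ∑ i, U i l * U i l = 1 := by
    intro l
    have := congrFun (congrFun hU l) l
    simpa [Matrix.mul_apply] using this
  have h1 : ∀ i, w i * MP P (fc U σ) i i ≤
      2 * w i + 2 * W * ∑ l, eP P (σ l) * (U i l * U i l) := by
    intro i
    have h2 : MP P (fc U σ) i i ≤ 2 + 2 * ∑ l, eP P (σ l) * (U i l * U i l) := by
      rw [e i, Finset.mul_sum]
      calc _ ≤ ∑ l, (2 * (1 + eP P (σ l))) * (U i l * U i l) :=
            Finset.sum_le_sum fun l _ => mul_le_mul_of_nonneg_right (eP_step P _ (hσ l))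
              (mul_self_nonneg _)
        _ = 2 * ∑ l, U i l * U i l + ∑ l, 2 * (eP P (σ l) * (U i l * U i l)) := by
            rw [Finset.mul_sum, ← Finset.sum_add_distrib]
            exact Finset.sum_congr rfl fun l _ => by ring
        _ = _ := by rw [hrow]; ring
    have h3 : 0 ≤ ∑ l, eP P (σ l) * (U i l * U i l) :=
      Finset.sum_nonneg fun l _ => mul_nonneg (eP_nonneg P (hσ l)) (mul_self_nonneg _)
    have h4 := mul_le_mul_of_nonneg_left h2 (hw i)
    have h5 := mul_le_mul_of_nonneg_right (hW i) h3
    linarith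
  calc _ ≤ ∑ i, (2 * w i + 2 * W * ∑ l, eP P (σ l) * (U i l * U i l)) :=
        Finset.sum_le_sum fun i _ => h1 i
    _ = _ := by
        rw [Finset.sum_add_distrib, ← Finset.mul_sum, ← Finset.mul_sum, Finset.sum_comm]
        congr 2
        refine Finset.sum_congr rfl fun l _ => ?_
        rw [← Finset.mul_sum, hcol, mul_one]

/-- Lower bound through a test vector. -/
lemma FP_ge {N : ℕ} (P : ℕ) {S : Matrix (Fin N) (Fin N) ℝ} (hS : S.PosSemidef)
    (q : Fin N → ℝ) {t : ℝ} (ht : 0 ≤ t) (hq : t * (q ⬝ᵥ q) < q ⬝ᵥ (S *ᵥ q)) :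
    eP P t ≤ FP P S := by
  obtain ⟨U, σ, hU, hU', hσ, rfl⟩ := exists_fc hS
  rw [FP_eq P hU hU']
  have hqq : q ⬝ᵥ q = ∑ l, ((Uᵀ *ᵥ q) l) ^ 2 := by
    have := fc_quad U (fun _ => 1) q
    rw [fc_one hU'] at this
    simpa using this
  obtain ⟨l, hl⟩ : ∃ l, t < σ l := by
    by_contra! hcon
    rw [fc_quad, hqq, Finset.mul_sum] at hq
    exact absurd hq (not_lt.2 (Finset.sum_le_sum fun l _ =>
      mul_le_mul_of_nonneg_right (hcon l) (sq_nonneg _)))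
  calc eP P t ≤ eP P (σ l) := Finset.sum_le_sum fun p _ =>
        div_le_div_of_nonneg_right (pow_le_pow_left₀ ht hl.le _) (by positivity)
    _ ≤ _ := Finset.single_le_sum (f := fun l => eP P (σ l)) (fun l _ => eP_nonneg P (hσ l))
        (Finset.mem_univ l)

/-- feature vector -/
def featV {𝒳 : Type u} (φ : ℕ → 𝒳 → ℝ) (w : ℕ → ℝ) (N : ℕ) (x : 𝒳) : Fin N → ℝ :=
  fun i => Real.sqrt (w i) * φ i x

/-- empirical second-moment matrix -/
def covS {𝒳 : Type u} (φ : ℕ → 𝒳 → ℝ) (w : ℕ → ℝ) (N : ℕ) {n : ℕ} (X : Fin n → 𝒳) :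
    Matrix (Fin N) (Fin N) ℝ :=
  ∑ j, vecMulVec (featV φ w N (X j)) (featV φ w N (X j))

lemma covS_psd {𝒳 : Type u} (φ : ℕ → 𝒳 → ℝ) (w : ℕ → ℝ) (N : ℕ) {n : ℕ} (X : Fin n → 𝒳) :
    (covS φ w N X).PosSemidef := by
  unfold covS
  refine Matrix.posSemidef_sum _ fun j _ => ?_
  simpa using Matrix.posSemidef_vecMulVec_self_star (featV φ w N (X j))

lemma inner_step {𝒳 : Type u} [MeasurableSpace 𝒳] (μ : Measure 𝒳) [IsProbabilityMeasure μ]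
    (φ : ℕ → 𝒳 → ℝ) (w : ℕ → ℝ) (N : ℕ) (hφ : OrthonormalFamily μ φ) (hw : ∀ i, 0 ≤ w i)
    (W T : ℝ) (hW : ∀ i, w i ≤ W) (hT : ∑ i ∈ Finset.range N, w i ≤ T)
    (hb : ∀ᵐ x ∂μ, ∑ i ∈ Finset.range N, w i * φ i x ^ 2 ≤ 1) (P : ℕ)
    {S : Matrix (Fin N) (Fin N) ℝ} (hS : S.PosSemidef) :
    ∫⁻ x, ENNReal.ofReal (FP P (S + vecMulVec (featV φ w N x) (featV φ w N x))) ∂μ ≤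
      ENNReal.ofReal ((1 + 2 * W) * FP P S + 2 * T) := by
  have hfeat_int : ∀ i j : Fin N, Integrable (fun x => featV φ w N x i * (MP P S i j * featV φ w N x j)) μ := by
    intro i j
    have h := (MemLp.integrable_mul (hφ.1 j) (hφ.1 i)).const_mul
      (Real.sqrt (w i) * Real.sqrt (w j) * MP P S i j)
    refine h.congr (Eventually.of_forall fun x => ?_)
    simp only [featV, Pi.mul_apply]; ring
  have hquad : ∀ x, featV φ w N x ⬝ᵥ (MP P S *ᵥ featV φ w N x) =
      ∑ i, ∑ j, featV φ w N x i * (MP P S i j * featV φ w N x j) := by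
    intro x
    simp only [dotProduct, mulVec, Finset.mul_sum]
  have hqint : Integrable (fun x => featV φ w N x ⬝ᵥ (MP P S *ᵥ featV φ w N x)) μ := by
    simp only [hquad]
    exact integrable_finsetSum _ fun i _ => integrable_finsetSum _ fun j _ => hfeat_int i j
  have hqval : ∫ x, featV φ w N x ⬝ᵥ (MP P S *ᵥ featV φ w N x) ∂μ = ∑ i : Fin N, w i * MP P S i i := by
    simp only [hquad]
    rw [integral_finsetSum _ fun i _ => integrable_finsetSum _ fun j _ => hfeat_int i j]
    refine Finset.sum_congr rfl fun i _ => ?_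
    rw [integral_finsetSum _ fun j _ => hfeat_int i j]
    have : ∀ j : Fin N, ∫ x, featV φ w N x i * (MP P S i j * featV φ w N x j) ∂μ =
        if i = j then w i * MP P S i i else 0 := by
      intro j
      have e : ∀ x, featV φ w N x i * (MP P S i j * featV φ w N x j) =
          (Real.sqrt (w i) * Real.sqrt (w j) * MP P S i j) * (φ i x * φ j x) := by
        intro x; simp only [featV]; ring
      simp only [e]
      rw [integral_const_mul, hφ.2]
      by_cases hij : i = j
      · subst hij; simp [Real.mul_self_sqrt (hw i)]
      · have : (i : ℕ) ≠ j := fun h => hij (Fin.ext h)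
        simp [hij, this]
    simp [this]
  have hae : ∀ᵐ x ∂μ, FP P (S + vecMulVec (featV φ w N x) (featV φ w N x)) ≤
      FP P S + featV φ w N x ⬝ᵥ (MP P S *ᵥ featV φ w N x) := by
    filter_upwards [hb] with x hx
    refine FP_step P hS _ ?_
    refine le_trans (le_of_eq ?_) hx
    rw [← Fin.sum_univ_eq_sum_range (fun i => w i * φ i x ^ 2) N]
    simp only [dotProduct, featV]
    refine Finset.sum_congr rfl fun i _ => ?_
    nlinarith [Real.mul_self_sqrt (hw i)]
  have hpos : ∀ x, 0 ≤ FP P (S + vecMulVec (featV φ w N x) (featV φ w N x)) := fun x =>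
    FP_nonneg P (hS.add (by simpa using Matrix.posSemidef_vecMulVec_self_star (featV φ w N x)))
  calc _ ≤ ∫⁻ x, ENNReal.ofReal (FP P S + featV φ w N x ⬝ᵥ (MP P S *ᵥ featV φ w N x)) ∂μ :=
        lintegral_mono_ae (hae.mono fun x hx => ENNReal.ofReal_le_ofReal hx)
    _ = ENNReal.ofReal (∫ x, (FP P S + featV φ w N x ⬝ᵥ (MP P S *ᵥ featV φ w N x)) ∂μ) := by
        have hi : Integrable (fun x => FP P S + featV φ w N x ⬝ᵥ (MP P S *ᵥ featV φ w N x)) μ :=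
          (integrable_const _).add hqint
        rw [ofReal_integral_eq_lintegral_ofReal hi]
        exact hae.mono fun x hx => (hpos x).trans hx
    _ ≤ _ := by
        refine ENNReal.ofReal_le_ofReal ?_
        rw [integral_add (integrable_const _) hqint, hqval]
        have := MP_diag P hS (fun i => w i) W (fun i => hw i) (fun i => hW i)
        rw [Fin.sum_univ_eq_sum_range (fun i => w i) N] at this
        simp only [integral_const, probReal_univ, one_smul]
        linarith

lemma FP_aemeas {𝒳 : Type u} [MeasurableSpace 𝒳] (μ : Measure 𝒳) [IsProbabilityMeasure μ]
    (φ : ℕ → 𝒳 → ℝ) (w : ℕ → ℝ) (N : ℕ) (hφ : OrthonormalFamily μ φ) (P n : ℕ) :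
    AEMeasurable (fun X : Fin n → 𝒳 => ENNReal.ofReal (FP P (covS φ w N X)))
      (Measure.pi fun _ => μ) := by
  have hc : Continuous (fun V : Fin n → Fin N → ℝ => FP P (∑ j, vecMulVec (V j) (V j))) := by
    unfold FP
    refine continuous_finsetSum _ fun p _ => ?_
    refine Continuous.div_const ?_ _
    refine Continuous.matrix_trace ?_
    refine Continuous.pow ?_ _
    refine continuous_finsetSum _ fun j _ => ?_
    exact Continuous.matrix_vecMulVec (continuous_apply j) (continuous_apply j)
  have hV : AEMeasurable (fun X : Fin n → 𝒳 => fun j => featV φ w N (X j))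
      (Measure.pi fun _ => μ) := by
    refine aemeasurable_pi_iff.2 fun j => aemeasurable_pi_iff.2 fun i => ?_
    refine AEMeasurable.const_mul ?_ _
    exact ((hφ.1 i).1.aemeasurable).comp_quasiMeasurePreserving
      (Measure.quasiMeasurePreserving_eval (fun _ => μ) j)
  exact (hc.measurable.comp_aemeasurable hV).ennreal_ofReal

lemma lint_bound {𝒳 : Type u} [MeasurableSpace 𝒳] (μ : Measure 𝒳) [IsProbabilityMeasure μ]
    (φ : ℕ → 𝒳 → ℝ) (w : ℕ → ℝ) (N : ℕ) (hφ : OrthonormalFamily μ φ) (hw : ∀ i, 0 ≤ w i)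
    (W T : ℝ) (hW0 : 0 < W) (hW : ∀ i, w i ≤ W) (hT : ∑ i ∈ Finset.range N, w i ≤ T)
    (hb : ∀ᵐ x ∂μ, ∑ i ∈ Finset.range N, w i * φ i x ^ 2 ≤ 1) (P n : ℕ) :
    ∫⁻ X : Fin n → 𝒳, ENNReal.ofReal (FP P (covS φ w N X)) ∂(Measure.pi fun _ => μ) ≤
      ENNReal.ofReal (T / W * ((1 + 2 * W) ^ n - 1)) := by
  have hT0 : 0 ≤ T := le_trans (Finset.sum_nonneg fun i _ => hw i) hT
  induction n with
  | zero =>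
    have : ∀ X : Fin 0 → 𝒳, FP P (covS φ w N X) = 0 := by
      intro X
      simp [covS, FP]
    simp [this]
  | succ n ih =>
    have hmp := measurePreserving_piFinSuccAbove (fun _ : Fin (n + 1) => μ) 0
    have e0 := hmp.lintegral_comp_emb (MeasurableEquiv.measurableEmbedding _)
      (fun z : 𝒳 × (Fin n → 𝒳) =>
        ENNReal.ofReal (FP P (covS φ w N z.2 + vecMulVec (featV φ w N z.1) (featV φ w N z.1))))
    have e1 : ∀ X : Fin (n + 1) → 𝒳, covS φ w N X =
        covS φ w N (MeasurableEquiv.piFinSuccAbove (fun _ => 𝒳) 0 X).2 +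
        vecMulVec (featV φ w N (MeasurableEquiv.piFinSuccAbove (fun _ => 𝒳) 0 X).1)
          (featV φ w N (MeasurableEquiv.piFinSuccAbove (fun _ => 𝒳) 0 X).1) := by
      intro X
      unfold covS
      rw [Fin.sum_univ_succ, add_comm]
      rfl
    simp only [e1]
    rw [e0, ← lintegral_prod_swap]
    refine (lintegral_prod_le _).trans ?_
    calc _ ≤ ∫⁻ X : Fin n → 𝒳, ENNReal.ofReal ((1 + 2 * W) * FP P (covS φ w N X) + 2 * T)
            ∂(Measure.pi fun _ => μ) :=
          lintegral_mono fun X => inner_step μ φ w N hφ hw W T hW hT hb P (covS_psd φ w N X)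
      _ = ∫⁻ X : Fin n → 𝒳, (ENNReal.ofReal (1 + 2 * W) * ENNReal.ofReal (FP P (covS φ w N X))
            + ENNReal.ofReal (2 * T)) ∂(Measure.pi fun _ => μ) := by
          refine lintegral_congr fun X => ?_
          rw [ENNReal.ofReal_add (mul_nonneg (by positivity) (FP_nonneg P (covS_psd φ w N X)))
            (by positivity), ENNReal.ofReal_mul (by positivity)]
      _ = ENNReal.ofReal (1 + 2 * W) * ∫⁻ X : Fin n → 𝒳, ENNReal.ofReal (FP P (covS φ w N X))
            ∂(Measure.pi fun _ => μ) + ENNReal.ofReal (2 * T) := by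
          rw [lintegral_add_right _ measurable_const, lintegral_const_mul'' _
            (FP_aemeas μ φ w N hφ P n)]
          simp
      _ ≤ ENNReal.ofReal (1 + 2 * W) * ENNReal.ofReal (T / W * ((1 + 2 * W) ^ n - 1))
            + ENNReal.ofReal (2 * T) := by gcongr
      _ = _ := by
          have h1 : 1 ≤ (1 + 2 * W) ^ n := one_le_pow₀ (by linarith)
          rw [← ENNReal.ofReal_mul (by positivity), ← ENNReal.ofReal_add _ (by positivity)]
          · congr 1
            field_simp
            ring
          · exact mul_nonneg (by positivity) (mul_nonneg (by positivity) (by linarith))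

lemma eP_tendsto (t : ℝ) : Tendsto (fun P => eP P t) atTop (nhds (Real.exp t - 1)) := by
  have h : HasSum (fun p : ℕ => t ^ p / p.factorial) (Real.exp t) := by
    rw [Real.exp_eq_exp_ℝ]; exact NormedSpace.expSeries_div_hasSum_exp t
  have h2 := (hasSum_nat_add_iff' 1).2 h
  simpa [eP] using h2.tendsto_sum_nat

lemma covS_event {𝒳 : Type u} (φ : ℕ → 𝒳 → ℝ) (w : ℕ → ℝ) (N : ℕ) (hw : ∀ i, 0 ≤ w i) {n : ℕ}
    (X : Fin n → 𝒳) (z : Fin n → ℝ) {t : ℝ} (ht : 0 ≤ t)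
    (h : t * ∑ j, z j ^ 2 < ∑ i ∈ Finset.range N, w i * (∑ j, z j * φ i (X j)) ^ 2) (P : ℕ) :
    eP P t ≤ FP P (covS φ w N X) := by
  set q : Fin N → ℝ := fun i => ∑ j, z j * featV φ w N (X j) i with hq
  have hqq : q ⬝ᵥ q = ∑ i ∈ Finset.range N, w i * (∑ j, z j * φ i (X j)) ^ 2 := by
    rw [← Fin.sum_univ_eq_sum_range (fun i => w i * (∑ j, z j * φ i (X j)) ^ 2) N]
    simp only [dotProduct]
    refine Finset.sum_congr rfl fun i _ => ?_
    have : q i = Real.sqrt (w i) * ∑ j, z j * φ i (X j) := by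
      simp only [hq, featV, Finset.mul_sum]
      exact Finset.sum_congr rfl fun j _ => by ring
    rw [this]
    nlinarith [Real.mul_self_sqrt (hw i)]
  have hz : q ⬝ᵥ q = ∑ j, z j * (featV φ w N (X j) ⬝ᵥ q) := by
    simp only [dotProduct, Finset.mul_sum]
    rw [Finset.sum_comm]
    refine Finset.sum_congr rfl fun i _ => ?_
    conv_lhs => rw [hq]
    simp only [Finset.sum_mul]
    refine Finset.sum_congr rfl fun j _ => ?_
    ring
  have hS : q ⬝ᵥ (covS φ w N X *ᵥ q) = ∑ j, (featV φ w N (X j) ⬝ᵥ q) ^ 2 := by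
    unfold covS
    rw [Matrix.sum_mulVec, dotProduct_sum]
    refine Finset.sum_congr rfl fun j _ => ?_
    rw [vecMulVec_mulVec]
    simp [dotProduct_comm q, sq]
  have hcs : (q ⬝ᵥ q) ^ 2 ≤ (∑ j, z j ^ 2) * (q ⬝ᵥ (covS φ w N X *ᵥ q)) := by
    rw [hS, hz]
    exact Finset.sum_mul_sq_le_sq_mul_sq _ _ _
  have hz0 : 0 ≤ ∑ j, z j ^ 2 := Finset.sum_nonneg fun j _ => sq_nonneg _
  rw [← hqq] at h
  have hq0 : 0 < q ⬝ᵥ q := lt_of_le_of_lt (mul_nonneg ht hz0) h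
  refine FP_ge P (covS_psd φ w N X) q ht ?_
  by_contra! hcon
  have h1 := mul_le_mul_of_nonneg_left hcon hz0
  nlinarith

/-- matrix Chernoff bound (finite number of features) -/
lemma chernoff_fin {𝒳 : Type u} [MeasurableSpace 𝒳] (μ : Measure 𝒳) [IsProbabilityMeasure μ]
    (φ : ℕ → 𝒳 → ℝ) (w : ℕ → ℝ) (N : ℕ) (hφ : OrthonormalFamily μ φ) (hw : ∀ i, 0 ≤ w i)
    (W T : ℝ) (hW0 : 0 < W) (hW : ∀ i, w i ≤ W) (hT : ∑ i ∈ Finset.range N, w i ≤ T)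
    (hb : ∀ᵐ x ∂μ, ∑ i ∈ Finset.range N, w i * φ i x ^ 2 ≤ 1) (n : ℕ) {t : ℝ} (ht : 0 < t)
    (htW : 2 * W * n ≤ t) :
    (Measure.pi fun _ => μ) {X : Fin n → 𝒳 | ∃ z : Fin n → ℝ,
      t * ∑ j, z j ^ 2 < ∑ i ∈ Finset.range N, w i * (∑ j, z j * φ i (X j)) ^ 2} ≤
      ENNReal.ofReal (T / W * Real.exp (2 * W * n - t)) := by
  have hT0 : 0 ≤ T := le_trans (Finset.sum_nonneg fun i _ => hw i) hT
  set E := {X : Fin n → 𝒳 | ∃ z : Fin n → ℝ,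
      t * ∑ j, z j ^ 2 < ∑ i ∈ Finset.range N, w i * (∑ j, z j * φ i (X j)) ^ 2}
  have h1 : ∀ P, ENNReal.ofReal (eP P t) * (Measure.pi fun _ => μ) E ≤
      ENNReal.ofReal (T / W * ((1 + 2 * W) ^ n - 1)) := by
    intro P
    refine le_trans ?_ (lint_bound μ φ w N hφ hw W T hW0 hW hT hb P n)
    refine le_trans ?_ (mul_meas_ge_le_lintegral₀ (FP_aemeas μ φ w N hφ P n) (ENNReal.ofReal (eP P t)))
    gcongr
    rintro X ⟨z, hz⟩
    exact ENNReal.ofReal_le_ofReal (covS_event φ w N hw X z ht.le hz P)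
  have h2 : ENNReal.ofReal (Real.exp t - 1) * (Measure.pi fun _ => μ) E ≤
      ENNReal.ofReal (T / W * ((1 + 2 * W) ^ n - 1)) := by
    refine le_of_tendsto' (ENNReal.Tendsto.mul_const
      (ENNReal.tendsto_ofReal (eP_tendsto t)) (Or.inr (measure_ne_top _ _))) h1
  have het : 1 < Real.exp t := Real.one_lt_exp_iff.2 ht
  have hp : (1 + 2 * W) ^ n ≤ Real.exp (2 * W * n) := by
    calc (1 + 2 * W) ^ n ≤ (Real.exp (2 * W)) ^ n :=
          pow_le_pow_left₀ (by linarith) (by linarith [Real.add_one_le_exp (2 * W)]) _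
      _ = _ := by rw [← Real.exp_nat_mul]; ring_nf
  have hle : Real.exp (2 * W * n) ≤ Real.exp t := Real.exp_le_exp.2 htW
  rw [mul_comm, ← ENNReal.le_div_iff_mul_le (Or.inl (by simpa using het)) (Or.inl (by simp)),
    ← ENNReal.ofReal_div_of_pos (by linarith)] at h2
  refine h2.trans (ENNReal.ofReal_le_ofReal ?_)
  rw [div_le_iff₀ (by linarith), mul_assoc]
  refine mul_le_mul_of_nonneg_left ?_ (by positivity)
  have : Real.exp (2 * W * n - t) * (Real.exp t - 1) =
      Real.exp (2 * W * n) - Real.exp (2 * W * n - t) := by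
    rw [mul_sub, ← Real.exp_add]; ring_nf
  rw [this]
  have : Real.exp (2 * W * n - t) ≤ 1 := Real.exp_le_one_iff.2 (by linarith)
  linarith

/-- matrix Chernoff bound (infinitely many features) -/
lemma chernoff_inf {𝒳 : Type u} [MeasurableSpace 𝒳] (μ : Measure 𝒳) [IsProbabilityMeasure μ]
    (φ : ℕ → 𝒳 → ℝ) (w : ℕ → ℝ) (hφ : OrthonormalFamily μ φ) (hw : ∀ i, 0 ≤ w i)
    (W T : ℝ) (hW0 : 0 < W) (hW : ∀ i, w i ≤ W) (hT : ∀ N, ∑ i ∈ Finset.range N, w i ≤ T)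
    (hb : ∀ᵐ x ∂μ, ∀ N, ∑ i ∈ Finset.range N, w i * φ i x ^ 2 ≤ 1) (n : ℕ) {t : ℝ} (ht : 0 < t)
    (htW : 2 * W * n ≤ t) :
    (Measure.pi fun _ => μ) {X : Fin n → 𝒳 | ∃ z : Fin n → ℝ,
      t * ∑ j, z j ^ 2 < ∑' i, w i * (∑ j, z j * φ i (X j)) ^ 2} ≤
      ENNReal.ofReal (T / W * Real.exp (2 * W * n - t)) := by
  set E : ℕ → Set (Fin n → 𝒳) := fun N => {X : Fin n → 𝒳 | ∃ z : Fin n → ℝ,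
      t * ∑ j, z j ^ 2 < ∑ i ∈ Finset.range N, w i * (∑ j, z j * φ i (X j)) ^ 2} with hE
  have hmono : Monotone E := by
    intro N M hNM X ⟨z, hz⟩
    refine ⟨z, hz.trans_le ?_⟩
    exact Finset.sum_le_sum_of_subset_of_nonneg (Finset.range_subset_range.2 hNM)
      fun i _ _ => mul_nonneg (hw i) (sq_nonneg _)
  have hsub : {X : Fin n → 𝒳 | ∃ z : Fin n → ℝ,
      t * ∑ j, z j ^ 2 < ∑' i, w i * (∑ j, z j * φ i (X j)) ^ 2} ⊆ ⋃ N, E N := by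
    rintro X ⟨z, hz⟩
    have hz0 : 0 ≤ ∑ j, z j ^ 2 := Finset.sum_nonneg fun j _ => sq_nonneg _
    have hs : Summable fun i => w i * (∑ j, z j * φ i (X j)) ^ 2 := by
      by_contra hns
      rw [tsum_eq_zero_of_not_summable hns] at hz
      exact absurd hz (not_lt.2 (mul_nonneg ht.le hz0))
    obtain ⟨N, hN⟩ := (hs.hasSum.tendsto_sum_nat.eventually_const_lt hz).exists
    exact Set.mem_iUnion.2 ⟨N, z, hN⟩
  refine (measure_mono hsub).trans ?_
  rw [hmono.measure_iUnion]
  refine iSup_le fun N => ?_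
  exact chernoff_fin μ φ w N hφ hw W T hW0 hW (hT N) (hb.mono fun x hx => hx N) n ht htW

lemma herm_fc {N : ℕ} {S : Matrix (Fin N) (Fin N) ℝ} (hS : S.IsHermitian) :
    ∃ (U : Matrix (Fin N) (Fin N) ℝ), Uᵀ * U = 1 ∧ U * Uᵀ = 1 ∧ S = fc U hS.eigenvalues := by
  refine ⟨hS.eigenvectorUnitary, ?_, ?_, ?_⟩
  · have := Unitary.coe_star_mul_self hS.eigenvectorUnitary
    rwa [star_eq_conjTranspose, conjTranspose_eq_transpose_of_trivial] at this
  · have := Unitary.coe_mul_star_self hS.eigenvectorUnitary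
    rwa [Unitary.coe_star, star_eq_conjTranspose, conjTranspose_eq_transpose_of_trivial] at this
  · have := hS.spectral_theorem
    rw [Unitary.conjStarAlgAut_apply, star_eq_conjTranspose,
      conjTranspose_eq_transpose_of_trivial] at this
    exact this

/-- Courant–Fischer type bound. -/
lemma eigval_le {n k : ℕ} (hk : 1 ≤ k) (hkn : k ≤ n) {M : Matrix (Fin n) (Fin n) ℝ}
    (hM : M.IsHermitian) (g : Fin (k - 1) → Fin n → ℝ) (B : ℝ)
    (h : ∀ z : Fin n → ℝ, (∀ i, ∑ j, z j * g i j = 0) → z ⬝ᵥ (M *ᵥ z) ≤ B * ∑ j, z j ^ 2) :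
    eigval M k ≤ B := by
  obtain ⟨U, hU, hU', hMU⟩ := herm_fc hM
  have hj : k - 1 < n := by omega
  unfold eigval
  rw [dif_pos hM, dif_pos hj]
  set e := hM.eigenvalues with he
  set s := Tuple.sort e with hs
  have hmono : Monotone (e ∘ s) := Tuple.monotone_sort e
  set r : Fin n := Fin.rev ⟨k - 1, hj⟩ with hr
  have hrv : (r : ℕ) = n - k := by simp [hr, Fin.val_rev]; omega
  let L1 : (Fin n → ℝ) →ₗ[ℝ] (Fin (k - 1) → ℝ) :=
    (Matrix.mulVecLin (Matrix.of g)) ∘ₗ (Matrix.mulVecLin U)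
  let L2 : (Fin n → ℝ) →ₗ[ℝ] (Fin (n - k) → ℝ) :=
    LinearMap.pi fun i => LinearMap.proj (s ⟨i, by omega⟩)
  have hker : LinearMap.ker (L1.prod L2) ≠ ⊥ := by
    apply LinearMap.ker_ne_bot_of_finrank_lt
    simp only [Module.finrank_prod, Module.finrank_fin_fun]
    omega
  obtain ⟨d, hd, hd0⟩ := Submodule.exists_mem_ne_zero_of_ne_bot hker
  have hd : (L1 d, L2 d) = 0 := hd
  rw [Prod.mk_eq_zero] at hd
  obtain ⟨hd1, hd2⟩ := hd
  set z := U *ᵥ d with hz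
  have hUz : Uᵀ *ᵥ z = d := by rw [hz, Matrix.mulVec_mulVec, hU, Matrix.one_mulVec]
  have hzz : ∑ j, z j ^ 2 = ∑ l, d l ^ 2 := by
    have := fc_quad U (fun _ => 1) z
    rw [fc_one hU', hUz] at this
    simp only [Matrix.one_mulVec, one_mul, dotProduct] at this
    rw [← this]
    exact Finset.sum_congr rfl fun j _ => sq _
  have hq : z ⬝ᵥ (M *ᵥ z) = ∑ l, e l * d l ^ 2 := by
    rw [hMU, fc_quad, hUz]
  have h1 := h z (by
    intro i
    have := congrFun hd1 i
    simp only [L1, LinearMap.comp_apply, Matrix.mulVecLin_apply, Pi.zero_apply] at this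
    rw [← this]
    simp only [mulVec, dotProduct, Matrix.of_apply, hz]
    exact Finset.sum_congr rfl fun j _ => mul_comm _ _)
  rw [hq, hzz] at h1
  have h2 : (e ∘ s) r * ∑ l, d l ^ 2 ≤ ∑ l, e l * d l ^ 2 := by
    rw [Finset.mul_sum]
    refine Finset.sum_le_sum fun l _ => ?_
    by_cases hl : (s.symm l : ℕ) < n - k
    · have := congrFun hd2 ⟨s.symm l, hl⟩
      simp [L2] at this
      simp [this]
    · refine mul_le_mul_of_nonneg_right ?_ (sq_nonneg _)
      have : r ≤ s.symm l := by rw [Fin.le_def, hrv]; omega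
      have := hmono this
      simpa using this
  have hdpos : 0 < ∑ l, d l ^ 2 := by
    obtain ⟨l, hl⟩ := Function.ne_iff.1 hd0
    refine Finset.sum_pos' (fun _ _ => sq_nonneg _) ⟨l, Finset.mem_univ _, ?_⟩
    have : d l ≠ 0 := hl
    positivity
  exact le_of_mul_le_mul_right (h2.trans h1) hdpos

lemma ae_summable {𝒳 : Type u} [MeasurableSpace 𝒳] (μ : Measure 𝒳) [IsProbabilityMeasure μ]
    (lam : ℕ → ℝ) (ψ : ℕ → 𝒳 → ℝ) (h0 : ∀ i, 0 ≤ lam i) (hs : Summable lam)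
    (hψ : OrthonormalFamily μ ψ) : ∀ᵐ x ∂μ, Summable fun i => lam i * ψ i x ^ 2 := by
  have hm : ∀ i, AEMeasurable (fun x => ENNReal.ofReal (lam i * ψ i x ^ 2)) μ := fun i =>
    (((hψ.1 i).1.aemeasurable.pow_const 2).const_mul _).ennreal_ofReal
  have hval : ∀ i, ∫⁻ x, ENNReal.ofReal (lam i * ψ i x ^ 2) ∂μ = ENNReal.ofReal (lam i) := by
    intro i
    have hi : Integrable (fun x => lam i * ψ i x ^ 2) μ := (hψ.1 i).integrable_sq.const_mul _
    rw [← ofReal_integral_eq_lintegral_ofReal hi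
      (Eventually.of_forall fun x => mul_nonneg (h0 i) (sq_nonneg _)), integral_const_mul]
    have := hψ.2 i i
    simp only [if_true, ← sq] at this
    rw [this, mul_one]
  have hfin : ∫⁻ x, ∑' i, ENNReal.ofReal (lam i * ψ i x ^ 2) ∂μ ≠ ⊤ := by
    rw [lintegral_tsum hm]
    simp only [hval]
    rw [← ENNReal.ofReal_tsum_of_nonneg h0 hs]
    exact ENNReal.ofReal_ne_top
  filter_upwards [ae_lt_top' (AEMeasurable.ennreal_tsum hm) hfin] with x hx
  have := ENNReal.summable_toReal hx.ne
  refine this.congr fun i => ?_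
  rw [ENNReal.toReal_ofReal (mul_nonneg (h0 i) (sq_nonneg _))]

lemma quad_hasSum {𝒳 : Type u} (lam : ℕ → ℝ) (ψ : ℕ → 𝒳 → ℝ) (h0 : ∀ i, 0 ≤ lam i) {n : ℕ}
    (X : Fin n → 𝒳) (hX : ∀ j, Summable fun i => lam i * ψ i (X j) ^ 2) (z : Fin n → ℝ) :
    HasSum (fun i => lam i * (∑ j, z j * ψ i (X j)) ^ 2) (z ⬝ᵥ (kerMat lam ψ X *ᵥ z)) := by
  have hent : ∀ j l, Summable fun i => lam i * ψ i (X j) * ψ i (X l) := by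
    intro j l
    refine Summable.of_norm_bounded ((hX j).add (hX l)) fun i => ?_
    rw [Real.norm_eq_abs, mul_assoc, abs_mul, abs_of_nonneg (h0 i), ← mul_add]
    refine mul_le_mul_of_nonneg_left ?_ (h0 i)
    rw [abs_le]
    constructor <;> nlinarith [sq_nonneg (ψ i (X j) + ψ i (X l)), sq_nonneg (ψ i (X j) - ψ i (X l)),
      sq_nonneg (ψ i (X j)), sq_nonneg (ψ i (X l))]
  have h1 : HasSum (fun i => ∑ j, ∑ l, z j * ((lam i * ψ i (X j) * ψ i (X l)) * z l))
      (∑ j, ∑ l, z j * (kerMat lam ψ X j l * z l)) :=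
    hasSum_sum fun j _ => hasSum_sum fun l _ =>
      ((hent j l).hasSum.mul_right (z l)).mul_left (z j)
  convert h1 using 1
  · funext i
    rw [sq, Finset.sum_mul_sum, Finset.mul_sum]
    refine Finset.sum_congr rfl fun j _ => ?_
    rw [Finset.mul_sum]
    exact Finset.sum_congr rfl fun l _ => by ring
  · simp only [dotProduct, mulVec, Finset.mul_sum]

lemma kerMat_herm {𝒳 : Type u} (lam : ℕ → ℝ) (ψ : ℕ → 𝒳 → ℝ) {n : ℕ} (X : Fin n → 𝒳) (c : ℝ) :
    (c • kerMat lam ψ X).IsHermitian := by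
  ext j l
  simp only [conjTranspose_apply, Matrix.smul_apply, kerMat, Matrix.of_apply, star_trivial]
  congr 1
  exact tsum_congr fun i => by ring

lemma beta_ae {𝒳 : Type u} [MeasurableSpace 𝒳] (μ : Measure 𝒳) [IsProbabilityMeasure μ]
    (lam : ℕ → ℝ) (ψ : ℕ → 𝒳 → ℝ) (k : ℕ) (h : BetaFinite μ lam ψ k) :
    ∀ᵐ x ∂μ, betaF lam ψ k x ≤ betaQ μ lam ψ k := by
  obtain ⟨C, hC⟩ := h
  exact ae_le_essSup ⟨C, by simpa using hC⟩

lemma beta_ge_one {𝒳 : Type u} [MeasurableSpace 𝒳] (μ : Measure 𝒳) [IsProbabilityMeasure μ]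
    (lam : ℕ → ℝ) (ψ : ℕ → 𝒳 → ℝ) (hψ : OrthonormalFamily μ ψ) (k : ℕ) (hk : 1 ≤ k)
    (h : BetaFinite μ lam ψ k) : 1 ≤ betaQ μ lam ψ k := by
  have h1 : ∀ᵐ x ∂μ, (∑ i ∈ Finset.range k, (ψ i x) ^ 2) / k ≤ betaQ μ lam ψ k := by
    filter_upwards [beta_ae μ lam ψ k h] with x hx
    exact ((le_max_left _ _).trans (le_max_left _ _)).trans hx
  have hi : ∀ i ∈ Finset.range k, Integrable (fun x => ψ i x ^ 2) μ :=
    fun i _ => (hψ.1 i).integrable_sq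
  have h2 := integral_mono_ae ((integrable_finsetSum _ hi).div_const (k : ℝ))
    (integrable_const (betaQ μ lam ψ k)) h1
  rw [integral_div, integral_finsetSum _ hi] at h2
  have h3 : ∀ i ∈ Finset.range k, ∫ x, ψ i x ^ 2 ∂μ = 1 := by
    intro i _
    have := hψ.2 i i
    simpa only [if_true, ← sq] using this
  rw [Finset.sum_congr rfl h3] at h2
  have hk' : (k : ℝ) ≠ 0 := by positivity
  simpa [hk'] using h2

lemma bad_one {𝒳 : Type u} [MeasurableSpace 𝒳] (μ : Measure 𝒳) [IsProbabilityMeasure μ]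
    (lam : ℕ → ℝ) (ψ : ℕ → 𝒳 → ℝ) (hψ : OrthonormalFamily μ ψ) (n k : ℕ) (hk : 1 ≤ k)
    (hkn : k ≤ n) (h : BetaFinite μ lam ψ k) :
    ∃ E : Set (Fin n → 𝒳), (Measure.pi fun _ => μ) E ≤ ENNReal.ofReal
        (2 * Real.exp (-(1 / betaQ μ lam ψ k) * max ((n : ℝ) / (k : ℝ)) (Real.log k))) ∧
      ∀ X ∉ E, ∀ z : Fin n → ℝ, ∑ i ∈ Finset.range k, (∑ j, z j * ψ i (X j)) ^ 2 ≤
        6 * betaQ μ lam ψ k * (n + k * Real.log k) * ∑ j, z j ^ 2 := by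
  have hβ := beta_ge_one μ lam ψ hψ k hk h
  have hae := beta_ae μ lam ψ k h
  set β := betaQ μ lam ψ k with hβd
  have hk1 : (1 : ℝ) ≤ k := by exact_mod_cast hk
  have hk0 : (0 : ℝ) < k := by linarith
  have hn0 : (0 : ℝ) < n := by exact_mod_cast (by omega : 0 < n)
  have hβ0 : 0 < β := by linarith
  have hlog : 0 ≤ Real.log k := Real.log_nonneg hk1
  have hnk : 0 < (n : ℝ) / k := by positivity
  have hW : 2 * (1 / (k * β)) * n ≤ 2 * ((n : ℝ) / k) := by
    have : 2 * (1 / (k * β)) * n = 2 * ((n : ℝ) / k) / β := by field_simp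
    rw [this]
    exact div_le_self (by positivity) hβ
  have hch := chernoff_fin μ ψ (fun _ => 1 / (k * β)) k hψ (fun _ => by positivity)
    (1 / (k * β)) (1 / β) (by positivity) (fun _ => le_rfl)
    (by simp; field_simp; rfl) (by
      filter_upwards [hae] with x hx
      have h1 : (∑ i ∈ Finset.range k, (ψ i x) ^ 2) / k ≤ β :=
        ((le_max_left _ _).trans (le_max_left _ _)).trans hx
      rw [← Finset.mul_sum]
      rw [div_le_iff₀ hk0] at h1
      rw [one_div, inv_mul_le_iff₀ (by positivity)]
      linarith) n (t := 6 * (n / k + Real.log k)) (by positivity)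
      (by nlinarith)
  refine ⟨_, hch.trans (ENNReal.ofReal_le_ofReal ?_), ?_⟩
  · have e1 : 1 / β / (1 / (k * β)) = Real.exp (Real.log k) := by
      rw [Real.exp_log hk0]; field_simp
    rw [e1, ← Real.exp_add]
    have h2 : Real.log k + (2 * (1 / (k * β)) * n - 6 * (n / k + Real.log k)) ≤
        -(1 / β) * max ((n : ℝ) / k) (Real.log k) := by
      have hm0 : 0 ≤ max ((n : ℝ) / k) (Real.log k) := le_max_of_le_right hlog
      have hm : max ((n : ℝ) / k) (Real.log k) ≤ (n : ℝ) / k + Real.log k :=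
        max_le (by linarith) (by linarith)
      have : 1 / β ≤ 1 := by rw [div_le_one hβ0]; exact hβ
      nlinarith
    have := Real.exp_le_exp.2 h2
    linarith [Real.exp_pos (-(1 / β) * max ((n : ℝ) / k) (Real.log k))]
  · intro X hX z
    simp only [Set.mem_setOf_eq, not_exists, not_lt] at hX
    have := hX z
    rw [← Finset.mul_sum, one_div, inv_mul_le_iff₀ (by positivity)] at this
    refine this.trans (le_of_eq ?_)
    field_simp

lemma bad_two {𝒳 : Type u} [MeasurableSpace 𝒳] (μ : Measure 𝒳) [IsProbabilityMeasure μ]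
    (lam : ℕ → ℝ) (ψ : ℕ → 𝒳 → ℝ) (h0 : ∀ i, 0 ≤ lam i) (hs : Summable lam)
    (hψ : OrthonormalFamily μ ψ) (hanti : ∀ i j : ℕ, i ≤ j → lam j ≤ lam i) (n k : ℕ) (hk : 1 ≤ k)
    (hkn : k ≤ n) (h : BetaFinite μ lam ψ k) :
    ∃ E : Set (Fin n → 𝒳), (Measure.pi fun _ => μ) E ≤ ENNReal.ofReal
        (4 * (rEff lam k / (k : ℝ) ^ 4) *
          Real.exp (-(1 / betaQ μ lam ψ k) * ((n : ℝ) / rEff lam k))) ∧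
      ∀ X ∉ E, ∀ z : Fin n → ℝ, ∑' i, lam (k + i) * (∑ j, z j * ψ (k + i) (X j)) ^ 2 ≤
        6 * betaQ μ lam ψ k * (n * lam k + Real.log (k + 1) * trTail lam k) * ∑ j, z j ^ 2 := by
  have hβ := beta_ge_one μ lam ψ hψ k hk h
  have hae := beta_ae μ lam ψ k h
  set β := betaQ μ lam ψ k with hβd
  have hk1 : (1 : ℝ) ≤ k := by exact_mod_cast hk
  have hk0 : (0 : ℝ) < k := by linarith
  have hn0 : (0 : ℝ) < n := by exact_mod_cast (by omega : 0 < n)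
  have hβ0 : 0 < β := by linarith
  have hlog : 0 ≤ Real.log (k + 1) := Real.log_nonneg (by linarith)
  have hlogk : Real.log k ≤ Real.log (k + 1) := Real.log_le_log hk0 (by linarith)
  have hlogk0 : 0 ≤ Real.log k := Real.log_nonneg hk1
  have hst : Summable fun i => lam (k + i) := by
    simpa only [add_comm k] using (summable_nat_add_iff k).2 hs
  have htr0 : 0 ≤ trTail lam k := tsum_nonneg fun i => h0 _
  have hop : opTail lam k = lam k := by
    unfold opTail
    refine le_antisymm (ciSup_le fun i => hanti _ _ (by omega)) ?_
    exact le_ciSup (f := fun i => lam (k + i)) ⟨lam k, by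
      rintro _ ⟨i, rfl⟩; exact hanti _ _ (by omega)⟩ 0
  rcases (h0 k).eq_or_lt with hl | hl
  · refine ⟨∅, by simp, fun X _ z => ?_⟩
    have : ∀ i, lam (k + i) = 0 := fun i =>
      le_antisymm ((hanti k (k + i) (by omega)).trans hl.symm.le) (h0 _)
    simp only [this, zero_mul, tsum_zero]
    have hz0 : 0 ≤ ∑ j, z j ^ 2 := Finset.sum_nonneg fun j _ => sq_nonneg _
    have := h0 k
    positivity
  have htr : 0 < trTail lam k := lt_of_lt_of_le hl (hst.le_tsum 0 fun i _ => h0 _)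
  have hr : rEff lam k = trTail lam k / lam k := by rw [rEff, hop]
  set tr := trTail lam k with htrd
  have hr0 : 0 < rEff lam k := by rw [hr]; positivity
  set r := rEff lam k with hrd
  have hl_eq : lam k = tr / r := by rw [hr]; field_simp
  have hnr : 0 < (n : ℝ) / r := by positivity
  have hWn : 2 * (1 / (β * r)) * n = 2 * ((n : ℝ) / r) / β := by field_simp
  have hW : 2 * (1 / (β * r)) * n ≤ 2 * ((n : ℝ) / r) := by
    rw [hWn]
    exact div_le_self (by positivity) hβ
  have hφ : OrthonormalFamily μ (fun i => ψ (k + i)) := by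
    refine ⟨fun i => hψ.1 _, fun i j => ?_⟩
    rw [hψ.2]; simp
  have hch := chernoff_inf μ (fun i => ψ (k + i)) (fun i => lam (k + i) / (β * tr)) hφ
    (fun i => div_nonneg (h0 _) (by positivity))
    (1 / (β * r)) (1 / β) (by positivity)
    (fun i => by
      have := hanti k (k + i) (by omega)
      calc lam (k + i) / (β * tr) ≤ lam k / (β * tr) := by gcongr
        _ = _ := by rw [hl_eq]; field_simp)
    (fun N => by
      rw [← Finset.sum_div, div_le_div_iff₀ (by positivity) hβ0]
      have := hst.sum_le_tsum (Finset.range N) fun i _ => h0 _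
      have : ∑ i ∈ Finset.range N, lam (k + i) ≤ tr := this
      nlinarith)
    (by
      filter_upwards [hae, ae_summable μ lam ψ h0 hs hψ] with x hx hsx N
      have h1 : (∑' i : ℕ, lam (k + i) * (ψ (k + i) x) ^ 2) / tr ≤ β :=
        ((le_max_right _ _).trans (le_max_left _ _)).trans hx
      have hsx' : Summable fun i => lam (k + i) * ψ (k + i) x ^ 2 := by
        simpa only [add_comm k] using (summable_nat_add_iff k).2 hsx
      rw [div_le_iff₀ htr] at h1
      have h2 := hsx'.sum_le_tsum (Finset.range N) fun i _ => mul_nonneg (h0 _) (sq_nonneg _)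
      simp only [div_mul_eq_mul_div]
      rw [← Finset.sum_div, div_le_one (by positivity)]
      exact h2.trans h1) n (t := 6 * (n / r + Real.log (k + 1))) (by positivity) (by nlinarith)
  refine ⟨_, hch.trans (ENNReal.ofReal_le_ofReal ?_), ?_⟩
  · have e1 : 1 / β / (1 / (β * r)) = r := by field_simp
    rw [e1]
    have h2 : 2 * (1 / (β * r)) * n - 6 * (n / r + Real.log (k + 1)) ≤
        -(1 / β) * ((n : ℝ) / r) - 4 * Real.log k := by
      have : 1 / β ≤ 1 := by rw [div_le_one hβ0]; exact hβ
      nlinarith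
    have h3 := Real.exp_le_exp.2 h2
    have h4 : Real.exp (-(1 / β) * ((n : ℝ) / r) - 4 * Real.log k) =
        Real.exp (-(1 / β) * ((n : ℝ) / r)) / (k : ℝ) ^ 4 := by
      rw [Real.exp_sub]
      congr 1
      rw [show (4 : ℝ) * Real.log k = ((4 : ℕ) : ℝ) * Real.log k by norm_num, Real.exp_nat_mul,
        Real.exp_log hk0]
    rw [h4] at h3
    have h5 : 0 ≤ r * (Real.exp (-(1 / β) * ((n : ℝ) / r)) / (k : ℝ) ^ 4) := by positivity
    calc _ ≤ r * (Real.exp (-(1 / β) * ((n : ℝ) / r)) / (k : ℝ) ^ 4) :=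
          mul_le_mul_of_nonneg_left h3 hr0.le
      _ ≤ 4 * (r * (Real.exp (-(1 / β) * ((n : ℝ) / r)) / (k : ℝ) ^ 4)) := by linarith
      _ = _ := by ring
  · intro X hX z
    simp only [Set.mem_setOf_eq, not_exists, not_lt] at hX
    have := hX z
    simp only [div_mul_eq_mul_div] at this
    rw [tsum_div_const, div_le_iff₀ (by positivity)] at this
    refine this.trans (le_of_eq ?_)
    rw [hl_eq]
    field_simp

theorem kernel_matrix_eigenvalue_upper_bound :
    ∃ c : ℝ, 0 < c ∧ ∃ c₂ : ℝ, 0 < c₂ ∧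
      ∀ (𝒳 : Type u) [MeasurableSpace 𝒳] (μ : Measure 𝒳) [IsProbabilityMeasure μ]
        (lam : ℕ → ℝ) (ψ : ℕ → 𝒳 → ℝ),
        (∀ i, 0 ≤ lam i) → Summable lam →
        OrthonormalFamily μ ψ →
        (∀ i j : ℕ, i ≤ j → lam j ≤ lam i) →
        (∀ k, BetaFinite μ lam ψ k) →
        RegularityAssumption μ lam ψ →
        ∀ n k : ℕ, 1 ≤ k → k ≤ n →
          ENNReal.ofReal
              (1 - 4 * (rEff lam k / (k : ℝ) ^ 4) *
                  Real.exp (-(c / betaQ μ lam ψ k) * ((n : ℝ) / rEff lam k)) -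
                2 * Real.exp (-(c / betaQ μ lam ψ k) * max ((n : ℝ) / (k : ℝ)) (Real.log k))) ≤
            iid μ n {X : Fin n → 𝒳 |
              eigval ((n : ℝ)⁻¹ • kerMat lam ψ X) k ≤
                c₂ * betaQ μ lam ψ k *
                  ((1 + (k : ℝ) * Real.log k / (n : ℝ)) * lam (k - 1) +
                    Real.log ((k : ℝ) + 1) * trTail lam k / (n : ℝ))} := by
  refine ⟨1, one_pos, 12, by norm_num, ?_⟩
  intro 𝒳 _ μ _ lam ψ h0 hs hψ hanti hB _ n k hk hkn
  obtain ⟨E1, hE1, h1⟩ := bad_one μ lam ψ hψ n k hk hkn (hB k)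
  obtain ⟨E2, hE2, h2⟩ := bad_two μ lam ψ h0 hs hψ hanti n k hk hkn (hB k)
  have hβ := beta_ge_one μ lam ψ hψ k hk (hB k)
  have hsum : ∀ᵐ X : Fin n → 𝒳 ∂(Measure.pi fun _ => μ),
      ∀ j, Summable fun i => lam i * ψ i (X j) ^ 2 := by
    refine eventually_all.2 fun j => ?_
    exact (Measure.tendsto_eval_ae_ae (μ := fun _ : Fin n => μ) (i := j)).eventually
      (ae_summable μ lam ψ h0 hs hψ)
  set β := betaQ μ lam ψ k with hβd
  set G := {X : Fin n → 𝒳 |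
              eigval ((n : ℝ)⁻¹ • kerMat lam ψ X) k ≤
                12 * β *
                  ((1 + (k : ℝ) * Real.log k / (n : ℝ)) * lam (k - 1) +
                    Real.log ((k : ℝ) + 1) * trTail lam k / (n : ℝ))} with hG
  have hk1 : (1 : ℝ) ≤ k := by exact_mod_cast hk
  have hn0 : (0 : ℝ) < n := by exact_mod_cast (by omega : 0 < n)
  have hβ0 : 0 < β := by linarith
  have hlog : 0 ≤ Real.log (k + 1) := Real.log_nonneg (by linarith)
  have hlogk0 : 0 ≤ Real.log k := Real.log_nonneg hk1
  have htr0 : 0 ≤ trTail lam k := tsum_nonneg fun i => h0 _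
  set E0 := {X : Fin n → 𝒳 | ¬ ∀ j, Summable fun i => lam i * ψ i (X j) ^ 2} with hE0
  have hE0m : (Measure.pi fun _ => μ) E0 = 0 := hsum
  have hcover : (Set.univ : Set (Fin n → 𝒳)) ⊆ ((G ∪ E1) ∪ E2) ∪ E0 := by
    intro X _
    by_contra hX
    simp only [Set.mem_union, not_or] at hX
    obtain ⟨⟨⟨hXG, hX1⟩, hX2⟩, hX0⟩ := hX
    have hX0' : ∀ j, Summable fun i => lam i * ψ i (X j) ^ 2 := by
      by_contra hc; exact hX0 hc
    refine hXG ?_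
    refine eigval_le hk hkn (kerMat_herm lam ψ X _) (fun i j => ψ i (X j)) _ fun z hz => ?_
    have hzz : 0 ≤ ∑ j, z j ^ 2 := Finset.sum_nonneg fun j _ => sq_nonneg _
    have hq := quad_hasSum lam ψ h0 X hX0' z
    rw [Matrix.smul_mulVec, dotProduct_smul, smul_eq_mul, ← hq.tsum_eq,
      ← hq.summable.sum_add_tsum_nat_add k]
    have ha := h1 X hX1 z
    have hb := h2 X hX2 z
    have hhead : ∑ i ∈ Finset.range k, lam i * (∑ j, z j * ψ i (X j)) ^ 2 ≤
        lam (k - 1) * ∑ i ∈ Finset.range k, (∑ j, z j * ψ i (X j)) ^ 2 := by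
      rw [Finset.mul_sum]
      refine Finset.sum_le_sum fun i hi => ?_
      have hi' : i < k := Finset.mem_range.1 hi
      by_cases hik : i < k - 1
      · have := hz ⟨i, hik⟩
        simp only at this
        rw [this]; simp
      · have : i = k - 1 := by omega
        rw [this]
    have hla := mul_le_mul_of_nonneg_left ha (h0 (k - 1))
    have htail : ∑' i, lam (i + k) * (∑ j, z j * ψ (i + k) (X j)) ^ 2 =
        ∑' i, lam (k + i) * (∑ j, z j * ψ (k + i) (X j)) ^ 2 := by
      simp only [add_comm k]
    rw [htail, inv_mul_le_iff₀ hn0]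
    have hlk : lam k ≤ lam (k - 1) := hanti _ _ (by omega)
    have e : n * (12 * β * ((1 + (k : ℝ) * Real.log k / (n : ℝ)) * lam (k - 1) +
                    Real.log ((k : ℝ) + 1) * trTail lam k / (n : ℝ)) * ∑ j, z j ^ 2) =
        12 * β * ((n + k * Real.log k) * lam (k - 1) + Real.log (k + 1) * trTail lam k) *
          ∑ j, z j ^ 2 := by
      field_simp
    rw [e]
    have hfin : lam (k - 1) * (6 * β * (n + k * Real.log k)) +
        6 * β * (n * lam k + Real.log (k + 1) * trTail lam k) ≤
        12 * β * ((n + k * Real.log k) * lam (k - 1) + Real.log (k + 1) * trTail lam k) := by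
      have p1 : 0 ≤ β * (Real.log (k + 1) * trTail lam k) := by positivity
      have p2 : 0 ≤ β * (n * (lam (k - 1) - lam k)) :=
        mul_nonneg hβ0.le (mul_nonneg hn0.le (by linarith))
      have p3 : 0 ≤ β * (k * Real.log k * lam (k - 1)) :=
        mul_nonneg hβ0.le (mul_nonneg (by positivity) (h0 _))
      nlinarith
    have hfin' := mul_le_mul_of_nonneg_right hfin hzz
    nlinarith
  have hm : (1 : ENNReal) ≤ (Measure.pi fun _ => μ) G + (Measure.pi fun _ => μ) E1 +
      (Measure.pi fun _ => μ) E2 + 0 := by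
    rw [← hE0m, ← measure_univ (μ := Measure.pi fun _ : Fin n => μ)]
    refine (measure_mono hcover).trans ?_
    refine (measure_union_le _ _).trans ?_
    gcongr
    refine (measure_union_le _ _).trans ?_
    gcongr
    exact measure_union_le _ _
  unfold iid
  have hr0 : 0 ≤ rEff lam k := by
    unfold rEff opTail
    exact div_nonneg htr0 (Real.iSup_nonneg fun i => h0 _)
  set a := 4 * (rEff lam k / (k : ℝ) ^ 4) * Real.exp (-(1 / β) * ((n : ℝ) / rEff lam k)) with ha
  set b := 2 * Real.exp (-(1 / β) * max ((n : ℝ) / (k : ℝ)) (Real.log k)) with hb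
  have ha0 : 0 ≤ a := by positivity
  have hb0 : 0 ≤ b := by positivity
  rw [ENNReal.ofReal_sub _ hb0, ENNReal.ofReal_sub _ ha0, ENNReal.ofReal_one,
    tsub_le_iff_right, tsub_le_iff_right]
  refine hm.trans ?_
  rw [add_zero]
  gcongr

end KRRPaper

end
end

section
/- Singular value concentration lemma. There exist absolute constants c', c₂ > 0 such that for any n ≥ 1 and k ∈ {1,…,n} with β_k < ∞, with probability at least 1 − 2·exp(−(c'/β_k)·max(n/k, log k)) over X drawn i.i.d. from μ, both of the following hold simultaneously: (1) μ_k(ψ_{≤k}(X)^⊤ψ_{≤k}(X)) ≥ max( √n − √((1/2)·max(n, β_k·(1+1/c')·k·log k)) , 0 )², and (2) μ₁(ψ_{≤k}(X)^⊤ψ_{≤k}(X)) ≤ c₂·max(n, β_k·k·log k). Moreover, there exist absolute constants c, c₁ > 0 such that if c·β_k·k·log(k) ≤ n, then with probability at least 1 − 2·exp(−(c'/β_k)·(n/k)): c₁·n ≤ μ_k(ψ_{≤k}(X)^⊤ψ_{≤k}(X)) ≤ μ₁(ψ_{≤k}(X)^⊤ψ_{≤k}(X)) ≤ c₂·n. 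-/
open MeasureTheory Matrix Filter

noncomputable section

namespace KRRPaper

universe u

variable {𝒳 : Type u}

section helpers

set_option linter.unusedSectionVars false
variable {ι : Type*} [Fintype ι] [DecidableEq ι]

lemma spec (A : Matrix ι ι ℝ) (hA : A.IsHermitian) :
    ∃ w : (ι → ℝ) → ι → ℝ, 
      (∀ m y, y ⬝ᵥ (A ^ m *ᵥ y) = ∑ i, hA.eigenvalues i ^ m * (w y i) ^ 2) ∧
      (∀ m (s t : ℝ), ((s • 1 + t • A) ^ m).trace = ∑ i, (s + t * hA.eigenvalues i) ^ m) ∧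
      (∀ i, ∃ x : ι → ℝ, x ⬝ᵥ x = 1 ∧ x ⬝ᵥ (A *ᵥ x) = hA.eigenvalues i) := by
  set d := hA.eigenvalues with hd
  set U : Matrix ι ι ℝ := (hA.eigenvectorUnitary : Matrix ι ι ℝ) with hU
  have h1 : Uᵀ * U = 1 := by
    have := Unitary.coe_star_mul_self hA.eigenvectorUnitary
    simpa [star_eq_conjTranspose] using this
  have h2 : U * Uᵀ = 1 := by
    have := Unitary.coe_mul_star_self hA.eigenvectorUnitary
    simpa [star_eq_conjTranspose] using this
  have h3 : A = U * diagonal d * Uᵀ := by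
    have := hA.spectral_theorem
    simpa [Unitary.conjStarAlgAut_apply, star_eq_conjTranspose, Function.comp_def] using this
  have hp : ∀ (s t : ℝ) m, (s • 1 + t • A) ^ m = U * diagonal (fun i => (s + t * d i) ^ m) * Uᵀ := by
    intro s t m
    have e : s • 1 + t • A = U * diagonal (fun i => (s + t * d i)) * Uᵀ := by
      have : diagonal (fun i => (s + t * d i)) = s • (1 : Matrix ι ι ℝ) + t • diagonal d := by
        ext i j; by_cases h : i = j <;> simp [h, diagonal, one_apply]
      rw [this, mul_add, add_mul]
      simp only [mul_smul_comm, smul_mul_assoc, mul_one, h2]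
      rw [← h3]
    induction m with
    | zero => simp [h2]
    | succ m ih =>
      rw [pow_succ, ih, e]
      calc _ = U * diagonal (fun i => (s + t * d i) ^ m) * (Uᵀ * U) * diagonal (fun i => (s + t * d i)) * Uᵀ := by
            simp only [Matrix.mul_assoc]
        _ = _ := by
          rw [h1, Matrix.mul_one, Matrix.mul_assoc U, diagonal_mul_diagonal]
          simp [pow_succ]
  have hp' : ∀ m, A ^ m = U * diagonal (fun i => (d i) ^ m) * Uᵀ := by
    intro m; have := hp 0 1 m; simpa using this
  have hq : ∀ m y, y ⬝ᵥ (A ^ m *ᵥ y) = ∑ i, d i ^ m * ((Uᵀ *ᵥ y) i) ^ 2 := by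
    intro m y
    rw [hp', ← mulVec_mulVec, ← mulVec_mulVec, dotProduct_mulVec, ← mulVec_transpose]
    simp only [dotProduct, mulVec_diagonal]
    exact Finset.sum_congr rfl fun i _ => by ring
  refine ⟨fun y => Uᵀ *ᵥ y, hq, ?_, ?_⟩
  · intro m s t
    rw [hp, trace_mul_comm, ← Matrix.mul_assoc, h1, Matrix.one_mul, trace_diagonal]
  · intro i
    refine ⟨U *ᵥ Pi.single i 1, ?_, ?_⟩
    · have := hq 0 (U *ᵥ Pi.single i 1)
      rw [mulVec_mulVec _ Uᵀ, h1, one_mulVec] at this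
      simpa [Pi.single_apply] using this
    · have := hq 1 (U *ᵥ Pi.single i 1)
      rw [mulVec_mulVec _ Uᵀ, h1, one_mulVec] at this
      simpa [Pi.single_apply] using this

/-- `t ≤ A` as quadratic forms -/
def LB (A : Matrix ι ι ℝ) (t : ℝ) : Prop := ∀ x : ι → ℝ, t * (x ⬝ᵥ x) ≤ x ⬝ᵥ (A *ᵥ x)
def UB (A : Matrix ι ι ℝ) (t : ℝ) : Prop := ∀ x : ι → ℝ, x ⬝ᵥ (A *ᵥ x) ≤ t * (x ⬝ᵥ x)

lemma quad (A : Matrix ι ι ℝ) (hA : A.IsHermitian) {t : ℝ} (ht : 0 < t) (h : LB A t) (y : ι → ℝ) :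
    (∀ m, 0 ≤ y ⬝ᵥ (A ^ m *ᵥ y)) ∧
    (∀ m, t * (y ⬝ᵥ (A ^ m *ᵥ y)) ≤ y ⬝ᵥ (A ^ (m+1) *ᵥ y)) ∧
    (∀ i j, (y ⬝ᵥ (A ^ i *ᵥ y)) * (y ⬝ᵥ (A ^ j *ᵥ y)) ≤ (y ⬝ᵥ y) * (y ⬝ᵥ (A ^ (i+j) *ᵥ y))) := by
  obtain ⟨w, hq, -, hx⟩ := spec A hA
  have hd : ∀ i, t ≤ hA.eigenvalues i := by
    intro i
    obtain ⟨x, h1, h2⟩ := hx i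
    have := h x
    rw [h1, h2] at this; linarith
  have hd0 : ∀ i, 0 ≤ hA.eigenvalues i := fun i => ht.le.trans (hd i)
  refine ⟨fun m => ?_, fun m => ?_, fun i j => ?_⟩
  · rw [hq]
    exact Finset.sum_nonneg fun i _ => mul_nonneg (pow_nonneg (hd0 i) _) (sq_nonneg _)
  · rw [hq, hq, Finset.mul_sum]
    refine Finset.sum_le_sum fun i _ => ?_
    rw [pow_succ, ← mul_assoc, mul_comm t]
    exact mul_le_mul_of_nonneg_right (mul_le_mul_of_nonneg_left (hd i) (pow_nonneg (hd0 i) _)) (sq_nonneg _)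
  · have h0 := hq 0 y
    simp only [pow_zero, one_mulVec, one_mul] at h0
    rw [h0, hq, hq, hq, Finset.sum_mul_sum, Finset.sum_mul_sum]
    set d := hA.eigenvalues
    set v := w y
    have key : ∀ s s', 0 ≤ (v s)^2 * (v s')^2 * ((d s ^ i - d s' ^ i) * (d s ^ j - d s' ^ j)) := by
      intro s s'
      refine mul_nonneg (by positivity) ?_
      rcases le_total (d s) (d s') with hs | hs
      · exact mul_nonneg_of_nonpos_of_nonpos (sub_nonpos.2 (pow_le_pow_left₀ (hd0 s) hs i)) (sub_nonpos.2 (pow_le_pow_left₀ (hd0 s) hs j))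
      · exact mul_nonneg (sub_nonneg.2 (pow_le_pow_left₀ (hd0 s') hs i)) (sub_nonneg.2 (pow_le_pow_left₀ (hd0 s') hs j))
    have hsum := Finset.sum_nonneg fun s (_ : s ∈ Finset.univ) => Finset.sum_nonneg fun s' (_ : s' ∈ Finset.univ) => key s s'
    have e1 : ∑ s, ∑ s', (v s)^2 * (d s' ^ (i+j) * (v s')^2) = ∑ s, ∑ s', (v s')^2 * (d s ^ (i+j) * (v s)^2) := Finset.sum_comm
    have e2 : ∑ s, ∑ s', d s ^ i * (v s)^2 * (d s' ^ j * (v s')^2) = ∑ s, ∑ s', d s' ^ i * (v s')^2 * (d s ^ j * (v s)^2) := Finset.sum_comm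
    have e3 : ∑ s, ∑ s', (v s)^2 * (v s')^2 * ((d s ^ i - d s' ^ i) * (d s ^ j - d s' ^ j)) =
       ∑ s, ∑ s', (v s)^2 * (d s' ^ (i+j) * (v s')^2) + ∑ s, ∑ s', (v s')^2 * (d s ^ (i+j) * (v s)^2)
        - ∑ s, ∑ s', d s ^ i * (v s)^2 * (d s' ^ j * (v s')^2) - ∑ s, ∑ s', d s' ^ i * (v s')^2 * (d s ^ j * (v s)^2) := by
      simp only [← Finset.sum_add_distrib, ← Finset.sum_sub_distrib]
      refine Finset.sum_congr rfl fun s _ => Finset.sum_congr rfl fun s' _ => ?_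
      ring
    linarith

/-- mixed terms -/
lemma mixed (A : Matrix ι ι ℝ) (hA : A.IsHermitian) {t q : ℝ} (ht : 0 < t) (h : LB A t) (y : ι → ℝ)
    (hq : y ⬝ᵥ y ≤ (q - 1) * t) (i : ℕ) : ∀ j,
    y ⬝ᵥ (A ^ (i + j) *ᵥ y) ≤ y ⬝ᵥ ((A ^ j * (A + vecMulVec y y) ^ i) *ᵥ y) ∧
    y ⬝ᵥ ((A ^ j * (A + vecMulVec y y) ^ i) *ᵥ y) ≤ q ^ i * (y ⬝ᵥ (A ^ (i + j) *ᵥ y)) := by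
  obtain ⟨h0, h1, h2⟩ := quad A hA ht h y
  have hyy : 0 ≤ y ⬝ᵥ y := by simpa using h0 0
  have hq1 : 0 ≤ q - 1 := by
    by_contra hc
    have := mul_neg_of_neg_of_pos (not_le.1 hc) ht
    linarith
  have hq0 : 0 ≤ q := by linarith
  induction i with
  | zero => intro j; simp
  | succ i ih =>
    intro j
    have hrec : y ⬝ᵥ ((A ^ j * (A + vecMulVec y y) ^ (i+1)) *ᵥ y) =
        y ⬝ᵥ ((A ^ (j+1) * (A + vecMulVec y y) ^ i) *ᵥ y) +
        (y ⬝ᵥ (A ^ j *ᵥ y)) * (y ⬝ᵥ ((A + vecMulVec y y) ^ i *ᵥ y)) := by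
      rw [pow_succ' (A + _), ← Matrix.mul_assoc, mul_add, add_mul, add_mulVec, dotProduct_add, pow_succ]
      congr 1
      rw [Matrix.mul_vecMulVec, Matrix.vecMulVec_mul, vecMulVec_mulVec, dotProduct_smul, dotProduct_mulVec y (_ ^ i)]
      simp
    obtain ⟨l1, l2⟩ := ih (j+1)
    obtain ⟨l3, l4⟩ := ih 0
    simp only [pow_zero, one_mul, add_zero] at l3 l4
    rw [hrec]
    have e : i + 1 + j = i + (j+1) := by ring
    have aj := h0 j
    have ai := h0 i
    rw [e]
    constructor
    · have := mul_nonneg aj (ai.trans l3)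
      linarith
    · have s1 := mul_le_mul_of_nonneg_left l4 aj
      have s2 := h2 j i
      have s3 := h1 (j+i)
      have a3 := h0 (j+i)
      have e' : j + i + 1 = i + (j+1) := by ring
      rw [e'] at s3
      have s4 : (y ⬝ᵥ (A ^ j *ᵥ y)) * (y ⬝ᵥ (A ^ i *ᵥ y)) ≤ (q-1) * (y ⬝ᵥ (A ^ (i + (j+1)) *ᵥ y)) := by
        calc _ ≤ _ := s2
          _ ≤ (q-1) * t * (y ⬝ᵥ (A ^ (j + i) *ᵥ y)) := mul_le_mul_of_nonneg_right hq a3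
          _ ≤ _ := by rw [mul_assoc]; exact mul_le_mul_of_nonneg_left s3 hq1
      have s5 := mul_le_mul_of_nonneg_left s4 (pow_nonneg hq0 i)
      rw [pow_succ q]
      nlinarith

lemma trace_step (A : Matrix ι ι ℝ) (hA : A.IsHermitian) {t q : ℝ} (ht : 0 < t) (h : LB A t) (y : ι → ℝ)
    (hq : y ⬝ᵥ y ≤ (q - 1) * t) (r : ℕ) :
    (A ^ (r+1)).trace + (r+1) * (y ⬝ᵥ (A ^ r *ᵥ y)) ≤ ((A + vecMulVec y y) ^ (r+1)).trace ∧
    ((A + vecMulVec y y) ^ (r+1)).trace ≤ (A ^ (r+1)).trace + (r+1) * (q ^ r * (y ⬝ᵥ (A ^ r *ᵥ y))) := by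
  obtain ⟨h0, h1, h2⟩ := quad A hA ht h y
  have hyy : 0 ≤ y ⬝ᵥ y := by simpa using h0 0
  have hq1 : 1 ≤ q := by
    by_contra hc
    have := mul_neg_of_neg_of_pos (sub_neg.2 (not_le.1 hc)) ht
    linarith
  have key : ∀ i j : ℕ, i + j = r + 1 →
      (A ^ (r+1)).trace + i * (y ⬝ᵥ (A ^ r *ᵥ y)) ≤ ((A + vecMulVec y y) ^ i * A ^ j).trace ∧
      ((A + vecMulVec y y) ^ i * A ^ j).trace ≤ (A ^ (r+1)).trace + i * (q ^ r * (y ⬝ᵥ (A ^ r *ᵥ y))) := by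
    intro i
    induction i with
    | zero => intro j hj; simp at hj; subst hj; simp
    | succ i ih =>
      intro j hj
      obtain ⟨g1, g2⟩ := ih (j+1) (by omega)
      obtain ⟨m1, m2⟩ := mixed A hA ht h y hq i j
      have hr : i + j = r := by omega
      rw [hr] at m1 m2
      have hrec : ((A + vecMulVec y y) ^ (i+1) * A ^ j).trace = ((A + vecMulVec y y) ^ i * A ^ (j+1)).trace
          + y ⬝ᵥ ((A ^ j * (A + vecMulVec y y) ^ i) *ᵥ y) := by
        rw [pow_succ, mul_add, add_mul, trace_add, pow_succ', Matrix.mul_assoc _ A]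
        congr 1
        rw [Matrix.mul_vecMulVec, Matrix.vecMulVec_mul, trace_vecMulVec, ← mulVec_mulVec, dotProduct_mulVec y,
          dotProduct_comm]
      rw [hrec]
      have m3 := mul_le_mul_of_nonneg_right (pow_le_pow_right₀ hq1 (by omega : i ≤ r)) (h0 r)
      push_cast
      constructor <;> linarith
  have := key (r+1) 0 (by omega)
  simpa using this

lemma trace_mono (A : Matrix ι ι ℝ) (hA : A.IsHermitian) {t : ℝ} (ht : 0 < t) (h : LB A t) (r : ℕ) :
    0 ≤ (A ^ r).trace ∧ t * (A ^ r).trace ≤ (A ^ (r+1)).trace ∧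
    ∀ T, UB A T → (A ^ (r+1)).trace ≤ T * (A ^ r).trace := by
  obtain ⟨w, -, hq, hx⟩ := spec A hA
  have hd : ∀ i, t ≤ hA.eigenvalues i := by
    intro i
    obtain ⟨x, h1, h2⟩ := hx i
    have := h x
    rw [h1, h2] at this; linarith
  have hd0 : ∀ i, 0 ≤ hA.eigenvalues i := fun i => ht.le.trans (hd i)
  have hq' : ∀ m, (A ^ m).trace = ∑ i, hA.eigenvalues i ^ m := fun m => by simpa using hq m 0 1
  rw [hq', hq']
  refine ⟨Finset.sum_nonneg fun i _ => pow_nonneg (hd0 i) _, ?_, fun T hT => ?_⟩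
  · rw [Finset.mul_sum]
    refine Finset.sum_le_sum fun i _ => ?_
    rw [pow_succ']
    exact mul_le_mul_of_nonneg_right (hd i) (pow_nonneg (hd0 i) _)
  · rw [Finset.mul_sum]
    refine Finset.sum_le_sum fun i _ => ?_
    rw [pow_succ']
    obtain ⟨x, h1, h2⟩ := hx i
    have := hT x
    rw [h1, h2] at this
    exact mul_le_mul_of_nonneg_right (by linarith) (pow_nonneg (hd0 i) _)

lemma herm_vv (y : ι → ℝ) : (vecMulVec y y).IsHermitian := by
  ext i j; simp [vecMulVec_apply, mul_comm]

lemma quad_vv (x y : ι → ℝ) : x ⬝ᵥ (vecMulVec y y *ᵥ x) = (x ⬝ᵥ y) ^ 2 := by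
  rw [vecMulVec_mulVec, dotProduct_smul, dotProduct_comm y x]
  simp [sq]

lemma cs (x y : ι → ℝ) : (x ⬝ᵥ y) ^ 2 ≤ (x ⬝ᵥ x) * (y ⬝ᵥ y) := by
  simp only [dotProduct, ← sq]
  exact Finset.sum_mul_sq_le_sq_mul_sq _ _ _

lemma self_nonneg (x : ι → ℝ) : 0 ≤ x ⬝ᵥ x := by
  simp only [dotProduct, ← sq]
  exact Finset.sum_nonneg fun _ _ => sq_nonneg _

section prob
variable {𝒳 : Type*} [MeasurableSpace 𝒳] (μ : Measure 𝒳) [IsProbabilityMeasure μ] (Y : 𝒳 → ι → ℝ)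

lemma int_quad (hY : Measurable Y) {R : ℝ} (hR : ∀ x, Y x ⬝ᵥ Y x ≤ R)
    (hI : ∀ a b, ∫ x, Y x a * Y x b ∂μ = if a = b then 1 else 0) (M : Matrix ι ι ℝ) :
    Integrable (fun x => Y x ⬝ᵥ (M *ᵥ Y x)) μ ∧ ∫ x, Y x ⬝ᵥ (M *ᵥ Y x) ∂μ = M.trace := by
  have hm : ∀ a, Measurable fun x => Y x a := fun a => (measurable_pi_apply a).comp hY
  have hintg : ∀ a b, Integrable (fun x => Y x a * Y x b) μ := by
    intro a b
    refine Integrable.of_bound (C := R) ((hm a).mul (hm b)).aestronglyMeasurable (ae_of_all _ fun x => ?_)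
    have h1 : ∀ a, Y x a ^ 2 ≤ R := fun a => by
      refine le_trans ?_ (hR x)
      simp only [dotProduct, ← sq]
      exact Finset.single_le_sum (f := fun i => Y x i ^ 2) (fun i _ => sq_nonneg _) (Finset.mem_univ a)
    rw [Real.norm_eq_abs, abs_le]
    have := h1 a
    have := h1 b
    constructor <;> nlinarith [sq_nonneg (Y x a - Y x b), sq_nonneg (Y x a + Y x b)]
  have e : (fun x => Y x ⬝ᵥ (M *ᵥ Y x)) = fun x => ∑ a, ∑ b, M a b * (Y x a * Y x b) := by
    ext x
    simp only [dotProduct, mulVec, Finset.mul_sum]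
    exact Finset.sum_congr rfl fun a _ => Finset.sum_congr rfl fun b _ => by ring
  rw [e]
  have hi : ∀ a b, Integrable (fun x => M a b * (Y x a * Y x b)) μ := fun a b => (hintg a b).const_mul _
  refine ⟨integrable_finsetSum _ fun a _ => integrable_finsetSum _ fun b _ => hi a b, ?_⟩
  rw [integral_finsetSum _ fun a _ => integrable_finsetSum _ fun b _ => hi a b]
  simp only [integral_finsetSum _ fun b _ => hi _ b, integral_const_mul, hI]
  simp [trace]

lemma upper_step (hY : Measurable Y) {R : ℝ} (hR : ∀ x, Y x ⬝ᵥ Y x ≤ R)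
    (hI : ∀ a b, ∫ x, Y x a * Y x b ∂μ = if a = b then 1 else 0) (A : Matrix ι ι ℝ) (hA : A.IsHermitian)
    {t q : ℝ} (ht : 0 < t) (h : LB A t) (hq : R ≤ (q - 1) * t) (hq0 : 0 ≤ q) (r : ℕ) :
    ∫⁻ x, ENNReal.ofReal (((A + (1:ℝ) • vecMulVec (Y x) (Y x)) ^ (r+1)).trace) ∂μ ≤
      ENNReal.ofReal ((1 + (r+1) * q ^ r / t) * (A ^ (r+1)).trace) := by
  obtain ⟨i1, i2⟩ := int_quad μ Y hY hR hI (A ^ r)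
  obtain ⟨t0, t1, -⟩ := trace_mono A hA ht h r
  obtain ⟨t2, -, -⟩ := trace_mono A hA ht h (r+1)
  have hg : Integrable (fun x => (A ^ (r+1)).trace + (r+1) * (q ^ r * (Y x ⬝ᵥ (A ^ r *ᵥ Y x)))) μ :=
    (integrable_const _).add ((i1.const_mul _).const_mul _)
  calc _ ≤ ∫⁻ x, ENNReal.ofReal ((A ^ (r+1)).trace + (r+1) * (q ^ r * (Y x ⬝ᵥ (A ^ r *ᵥ Y x)))) ∂μ := by
        refine lintegral_mono fun x => ENNReal.ofReal_le_ofReal ?_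
        rw [one_smul]
        exact (trace_step A hA ht h (Y x) ((hR x).trans hq) r).2
    _ = ENNReal.ofReal (∫ x, (A ^ (r+1)).trace + (r+1) * (q ^ r * (Y x ⬝ᵥ (A ^ r *ᵥ Y x))) ∂μ) := by
        rw [ofReal_integral_eq_lintegral_ofReal hg (ae_of_all _ fun x => ?_)]
        have := (quad A hA ht h (Y x)).1 r
        simp only [Pi.zero_apply]
        positivity
    _ ≤ _ := by
        refine ENNReal.ofReal_le_ofReal ?_
        rw [integral_add (integrable_const _) ((i1.const_mul _).const_mul _), integral_const_mul, integral_const_mul, i2]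
        simp only [integral_const, probReal_univ, one_smul]
        have : (A ^ r).trace ≤ (A ^ (r+1)).trace / t := by rw [le_div_iff₀ ht]; linarith
        have h3 : 0 ≤ ((r:ℝ)+1) * q ^ r := by positivity
        have := mul_le_mul_of_nonneg_left this h3
        have e : (1 + (r+1) * q ^ r / t) * (A ^ (r+1)).trace =
            (A ^ (r+1)).trace + (r+1) * q ^ r * ((A ^ (r+1)).trace / t) := by ring
        rw [e]; linarith

lemma LB_sub {A : Matrix ι ι ℝ} {t R : ℝ} {y : ι → ℝ} (h : LB A (t + R)) (hy : y ⬝ᵥ y ≤ R) :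
    LB (A + (-1:ℝ) • vecMulVec y y) t := by
  intro x
  have h1 := h x
  have h2 := cs x y
  have h3 := mul_le_mul_of_nonneg_left hy (self_nonneg x)
  rw [add_mulVec, dotProduct_add, smul_mulVec, dotProduct_smul, quad_vv, smul_eq_mul]
  nlinarith

lemma UB_sub {A : Matrix ι ι ℝ} {T : ℝ} {y : ι → ℝ} (h : UB A T) :
    UB (A + (-1:ℝ) • vecMulVec y y) T := by
  intro x
  have h1 := h x
  rw [add_mulVec, dotProduct_add, smul_mulVec, dotProduct_smul, quad_vv, smul_eq_mul]
  nlinarith [sq_nonneg (x ⬝ᵥ y)]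

lemma LB_add {A : Matrix ι ι ℝ} {t : ℝ} {y : ι → ℝ} (h : LB A t) :
    LB (A + (1:ℝ) • vecMulVec y y) t := by
  intro x
  have h1 := h x
  rw [add_mulVec, dotProduct_add, smul_mulVec, dotProduct_smul, quad_vv, smul_eq_mul]
  nlinarith [sq_nonneg (x ⬝ᵥ y)]

lemma herm_add {A : Matrix ι ι ℝ} (hA : A.IsHermitian) (ε : ℝ) (y : ι → ℝ) :
    (A + ε • vecMulVec y y).IsHermitian := by
  ext i j
  have := hA.apply i j
  simp [vecMulVec_apply, mul_comm] at this ⊢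
  exact this

lemma lower_step (hY : Measurable Y) {R : ℝ} (hR : ∀ x, Y x ⬝ᵥ Y x ≤ R)
    (hI : ∀ a b, ∫ x, Y x a * Y x b ∂μ = if a = b then 1 else 0) (A : Matrix ι ι ℝ) (hA : A.IsHermitian)
    {t q T : ℝ} (ht : 0 < t) (hR0 : 0 ≤ R) (h : LB A (t + R)) (hT : UB A T) (hT0 : 0 < T)
    (hq : R ≤ (q - 1) * t) (hq0 : 0 < q) (r : ℕ) :
    ∫⁻ x, ENNReal.ofReal (((A + (-1:ℝ) • vecMulVec (Y x) (Y x)) ^ (r+1)).trace) ∂μ ≤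
      ENNReal.ofReal ((1 - (r+1) / (q ^ r * T)) * (A ^ (r+1)).trace) := by
  obtain ⟨i1, i2⟩ := int_quad μ Y hY hR hI (A ^ r)
  obtain ⟨t0, -, t1⟩ := trace_mono A hA (by linarith) h r
  have t1 := t1 T hT
  have hpt : ∀ x, 0 ≤ ((A + (-1:ℝ) • vecMulVec (Y x) (Y x)) ^ (r+1)).trace ∧
      ((A + (-1:ℝ) • vecMulVec (Y x) (Y x)) ^ (r+1)).trace ≤
      (A ^ (r+1)).trace - (r+1) / q ^ r * (Y x ⬝ᵥ (A ^ r *ᵥ Y x)) := by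
    intro x
    set B := A + (-1:ℝ) • vecMulVec (Y x) (Y x) with hB
    have hBA : A = B + vecMulVec (Y x) (Y x) := by simp [hB]
    have hBh : B.IsHermitian := herm_add hA _ _
    have hBl : LB B t := LB_sub h (hR x)
    have s1 := (trace_step B hBh ht hBl (Y x) ((hR x).trans hq) r).1
    have s2 := (mixed B hBh ht hBl (Y x) ((hR x).trans hq) r 0).2
    rw [← hBA] at s1 s2
    simp only [pow_zero, one_mul, add_zero] at s2
    refine ⟨(trace_mono B hBh ht hBl (r+1)).1, ?_⟩
    have s3 : (r+1) / q ^ r * (Y x ⬝ᵥ (A ^ r *ᵥ Y x)) ≤ (r+1) * (Y x ⬝ᵥ (B ^ r *ᵥ Y x)) := by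
      rw [div_mul_eq_mul_div, mul_div_assoc]
      refine mul_le_mul_of_nonneg_left ?_ (by positivity)
      rw [div_le_iff₀ (by positivity)]
      linarith
    linarith
  have hg : Integrable (fun x => (A ^ (r+1)).trace - (r+1) / q ^ r * (Y x ⬝ᵥ (A ^ r *ᵥ Y x))) μ :=
    (integrable_const _).sub (i1.const_mul _)
  calc _ ≤ ∫⁻ x, ENNReal.ofReal ((A ^ (r+1)).trace - (r+1) / q ^ r * (Y x ⬝ᵥ (A ^ r *ᵥ Y x))) ∂μ :=
        lintegral_mono fun x => ENNReal.ofReal_le_ofReal (hpt x).2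
    _ = ENNReal.ofReal (∫ x, (A ^ (r+1)).trace - (r+1) / q ^ r * (Y x ⬝ᵥ (A ^ r *ᵥ Y x)) ∂μ) := by
        rw [ofReal_integral_eq_lintegral_ofReal hg (ae_of_all _ fun x => ?_)]
        exact (hpt x).1.trans (hpt x).2
    _ ≤ _ := by
        refine ENNReal.ofReal_le_ofReal ?_
        rw [integral_sub (integrable_const _) (i1.const_mul _), integral_const_mul, i2]
        simp only [integral_const, probReal_univ, one_smul]
        have : (A ^ (r+1)).trace / T ≤ (A ^ r).trace := by rw [div_le_iff₀ hT0]; linarith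
        have h3 : 0 ≤ ((r:ℝ)+1) / q ^ r := by positivity
        have := mul_le_mul_of_nonneg_left this h3
        calc _ ≤ (A ^ (r+1)).trace - (r+1) / q ^ r * ((A ^ (r+1)).trace / T) := by linarith
          _ = _ := by field_simp

lemma meas_tr {Y : 𝒳 → ι → ℝ} (hY : Measurable Y) (A : Matrix ι ι ℝ) (ε : ℝ) (p n : ℕ) :
    Measurable fun X : Fin n → 𝒳 => ((A + ε • ∑ i, vecMulVec (Y (X i)) (Y (X i))) ^ p).trace := by
  have hc : Continuous fun v : Fin n → ι → ℝ => ((A + ε • ∑ i, vecMulVec (v i) (v i)) ^ p).trace := by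
    refine Continuous.matrix_trace (Continuous.pow ?_ p)
    refine continuous_const.add (Continuous.const_smul ?_ ε)
    refine continuous_finsetSum _ fun i _ => ?_
    exact Continuous.matrix_vecMulVec (continuous_apply i) (continuous_apply i)
  exact hc.measurable.comp (measurable_pi_lambda _ fun i => hY.comp (measurable_pi_apply i))

lemma iter (hY : Measurable Y) (ε ρ : ℝ) (hρ : 0 ≤ ρ) (p : ℕ) (Q : ℕ → Matrix ι ι ℝ → Prop)
    (hQ1 : ∀ j A, Q (j+1) A → ∀ x, Q j (A + ε • vecMulVec (Y x) (Y x)))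
    (hQ2 : ∀ j A, Q (j+1) A → ∫⁻ x, ENNReal.ofReal (((A + ε • vecMulVec (Y x) (Y x)) ^ p).trace) ∂μ
      ≤ ENNReal.ofReal (ρ * (A ^ p).trace)) :
    ∀ n A, Q n A → ∫⁻ X, ENNReal.ofReal (((A + ε • ∑ i, vecMulVec (Y (X i)) (Y (X i))) ^ p).trace)
      ∂(Measure.pi fun _ : Fin n => μ) ≤ ENNReal.ofReal (ρ ^ n * (A ^ p).trace) := by
  intro n
  induction n with
  | zero => intro A _; simp
  | succ n ih =>
    intro A hA
    have hmp := measurePreserving_piFinSuccAbove (fun _ : Fin (n+1) => μ) 0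
    have hmp' := hmp.symm
    rw [← hmp'.lintegral_comp (meas_tr hY A ε p (n+1)).ennreal_ofReal]
    rw [lintegral_prod]
    swap
    · exact ((meas_tr hY A ε p (n+1)).ennreal_ofReal.comp hmp'.measurable).aemeasurable
    have e : ∀ x (X : Fin n → 𝒳), A + ε • ∑ i, vecMulVec (Y ((MeasurableEquiv.piFinSuccAbove (fun _ => 𝒳) 0).symm (x, X) i))
        (Y ((MeasurableEquiv.piFinSuccAbove (fun _ => 𝒳) 0).symm (x, X) i)) = 
        (A + ε • vecMulVec (Y x) (Y x)) + ε • ∑ i, vecMulVec (Y (X i)) (Y (X i)) := by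
      intro x X
      rw [Fin.sum_univ_succ, smul_add, ← add_assoc]
      rfl
    simp only [e]
    calc _ ≤ ∫⁻ x, ENNReal.ofReal (ρ ^ n) * ENNReal.ofReal (((A + ε • vecMulVec (Y x) (Y x)) ^ p).trace) ∂μ := by
          refine lintegral_mono fun x => ?_
          rw [← ENNReal.ofReal_mul (by positivity)]
          exact ih _ (hQ1 n A hA x)
      _ = ENNReal.ofReal (ρ ^ n) * ∫⁻ x, ENNReal.ofReal (((A + ε • vecMulVec (Y x) (Y x)) ^ p).trace) ∂μ :=
          lintegral_const_mul' _ _ ENNReal.ofReal_ne_top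
      _ ≤ ENNReal.ofReal (ρ ^ n) * ENNReal.ofReal (ρ * (A ^ p).trace) := by gcongr; exact hQ2 n A hA
      _ = _ := by rw [← ENNReal.ofReal_mul (by positivity), pow_succ, mul_assoc]

lemma markov {Ω : Type*} [MeasurableSpace Ω] (ν : Measure Ω) (f : Ω → ℝ) (hf : Measurable f) {C c : ℝ} (hc : 0 < c)
    (h : ∫⁻ x, ENNReal.ofReal (f x) ∂ν ≤ ENNReal.ofReal C) : ν {x | c ≤ f x} ≤ ENNReal.ofReal (C / c) := by
  have h1 := meas_ge_le_lintegral_div (μ := ν) hf.ennreal_ofReal.aemeasurable (ε := ENNReal.ofReal c)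
    (by simpa using hc) ENNReal.ofReal_ne_top
  rw [ENNReal.ofReal_div_of_pos hc]
  refine (measure_mono fun x hx => ?_).trans (h1.trans (by gcongr))
  exact ENNReal.ofReal_le_ofReal hx

lemma smul_one_LB (T : ℝ) : LB (T • (1 : Matrix ι ι ℝ)) T := fun x => by simp [smul_mulVec]
lemma smul_one_UB (T : ℝ) : UB (T • (1 : Matrix ι ι ℝ)) T := fun x => by simp [smul_mulVec]
lemma smul_one_herm (T : ℝ) : (T • (1 : Matrix ι ι ℝ)).IsHermitian := by
  ext i j; by_cases h : i = j <;> simp [one_apply, h, eq_comm]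

lemma smul_one_tr (T : ℝ) (p : ℕ) : ((T • (1 : Matrix ι ι ℝ)) ^ p).trace = Fintype.card ι * T ^ p := by
  rw [smul_pow, one_pow, trace_smul, trace_one, smul_eq_mul, mul_comm]

lemma q_pow_le {n : ℕ} (hn : 1 ≤ n) (r : ℕ) (hr : r ≤ n) : (1 + 1 / (n:ℝ)) ^ r ≤ 2.72 := by
  have hn' : (0:ℝ) < n := by exact_mod_cast hn
  calc (1 + 1 / (n:ℝ)) ^ r ≤ (1 + 1 / (n:ℝ)) ^ n := 
        pow_le_pow_right₀ (by have : 0 < 1 / (n:ℝ) := by positivity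
                              linarith) hr
    _ ≤ (Real.exp (1 / n)) ^ n := by
        refine pow_le_pow_left₀ (by positivity) ?_ _
        linarith [Real.add_one_le_exp (1 / (n:ℝ))]
    _ = Real.exp 1 := by rw [← Real.exp_nat_mul]; congr 1; field_simp
    _ ≤ 2.72 := by linarith [Real.exp_one_lt_d9]

lemma lower_tail (hY : Measurable Y) {R : ℝ} (hR : ∀ x, Y x ⬝ᵥ Y x ≤ R) (hR1 : 1 ≤ R)
    (hI : ∀ a b, ∫ x, Y x a * Y x b ∂μ = if a = b then 1 else 0) (r : ℕ) :
    (Measure.pi fun _ : Fin (r+1) => μ) {X | (2 * (r+1:ℝ) * R - (r+1:ℝ)/10) ^ (r+1) ≤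
      (((2 * (r+1:ℝ) * R) • 1 + (-1:ℝ) • ∑ i, vecMulVec (Y (X i)) (Y (X i))) ^ (r+1)).trace} ≤
      ENNReal.ofReal (Fintype.card ι * Real.exp (-(0.1 * ((r+1:ℝ) / R)))) := by
  set n : ℝ := (r + 1 : ℝ) with hn
  have hn1 : 1 ≤ n := by simp [hn]
  have hn0 : 0 < n := by linarith
  have hR0 : 0 < R := by linarith
  set T := 2 * n * R with hT
  set q := 1 + 1 / n with hq
  have hq0 : 1 ≤ q := by have : 0 < 1 / n := by positivity
                         linarith
  have hqr : q ^ r ≤ 2.72 := by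
    have := q_pow_le (n := r+1) (by omega) r (by omega)
    push_cast at this
    exact this
  have hqr0 : 1 ≤ q ^ r := one_le_pow₀ hq0
  have hT0 : 0 < T := by positivity
  set ρ := 1 - n / (q ^ r * T) with hρd
  have hρe : n / (q ^ r * T) = 1 / (q ^ r * (2 * R)) := by rw [hT]; field_simp
  have hρ0 : 0 ≤ ρ := by
    rw [hρd, hρe, sub_nonneg, div_le_one (by positivity)]
    nlinarith
  have key := iter μ Y hY (-1) ρ hρ0 (r+1)
    (fun j A => A.IsHermitian ∧ LB A (n * R + j * R) ∧ UB A T) (by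
      rintro j A ⟨h1, h2, h3⟩ x
      refine ⟨herm_add h1 _ _, LB_sub ?_ (hR x), UB_sub h3⟩
      convert h2 using 1; push_cast; ring) (by
      rintro j A ⟨h1, h2, h3⟩
      have ht : n * R ≤ n * R + j * R := by
        have : 0 ≤ (j:ℝ) * R := by positivity
        linarith
      have := lower_step μ Y hY hR hI A h1 (t := n * R + j * R) (q := q) (T := T) (by positivity) hR0.le
        (by convert h2 using 1; push_cast; ring) h3 hT0 (by
          have : (q - 1) * (n * R) = R := by rw [hq]; field_simp; ring
          have h4 := mul_le_mul_of_nonneg_left ht (sub_nonneg.2 hq0)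
          linarith) (by linarith) r
      exact this) (r+1) (T • 1) ⟨smul_one_herm _, by
        convert smul_one_LB (ι := ι) T using 1; rw [hT, hn]; push_cast; ring, smul_one_UB T⟩
  rw [smul_one_tr] at key
  have hTa : 0 < T - n / 10 := by rw [hT]; nlinarith
  refine (markov _ _ (meas_tr hY _ _ _ _) (pow_pos hTa _) key).trans (ENNReal.ofReal_le_ofReal ?_)
  have h1 : ρ * T / (T - n/10) ≤ Real.exp (-(0.1 / R)) := by
    have e1 : ρ ≤ Real.exp (-(1 / (5.44 * R))) := by
      have : 1 / (5.44 * R) ≤ 1 / (q ^ r * (2 * R)) := by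
        apply one_div_le_one_div_of_le (by positivity); nlinarith
      have h2 := Real.add_one_le_exp (-(1 / (5.44 * R)))
      rw [hρd, hρe]; linarith
    have e2 : T / (T - n/10) ≤ Real.exp (1 / (19 * R)) := by
      have : T / (T - n/10) = 1 + 1 / (20 * R - 1) := by
        obtain ⟨w, hw⟩ : ∃ w, w = 20 * R - 1 := ⟨_, rfl⟩
        have hw0 : 0 < w := by linarith
        have hRw : R = (w + 1) / 20 := by linarith
        rw [← hw, div_eq_iff hTa.ne', hT, hRw]
        clear_value n
        field_simp
        ring
      rw [this]
      have h3 : 1 / (20 * R - 1) ≤ 1 / (19 * R) := one_div_le_one_div_of_le (by positivity) (by linarith)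
      have h2 := Real.add_one_le_exp (1 / (19 * R))
      linarith
    rw [mul_div_assoc]
    calc _ ≤ Real.exp (-(1 / (5.44 * R))) * Real.exp (1 / (19 * R)) := 
          mul_le_mul e1 e2 (by positivity) (Real.exp_pos _).le
      _ = Real.exp (-(1 / (5.44 * R)) + 1 / (19 * R)) := (Real.exp_add _ _).symm
      _ ≤ _ := by
        apply Real.exp_le_exp.2
        have : -(1 / (5.44 * R)) + 1 / (19 * R) = -((1/5.44 - 1/19) * (1 / R)) := by field_simp; ring
        rw [this, div_eq_mul_one_div 0.1 R]
        have h9 : 0 < 1 / R := by positivity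
        have h10 : (0.1:ℝ) ≤ 1/5.44 - 1/19 := by norm_num
        have := mul_le_mul_of_nonneg_right h10 h9.le
        linarith
  clear_value ρ T
  calc ρ ^ (r+1) * (Fintype.card ι * T ^ (r+1)) / (T - n/10) ^ (r+1) =
      Fintype.card ι * (ρ * T / (T - n/10)) ^ (r+1) := by rw [div_pow, mul_pow]; ring
    _ ≤ Fintype.card ι * (Real.exp (-(0.1 / R))) ^ (r+1) := by gcongr
    _ = _ := by
      rw [← Real.exp_nat_mul]; congr 2; push_cast; rw [← hn]; ring

/-- upper tail; `p = r+1` satisfies `s ≤ p R` -/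
lemma upper_tail (hY : Measurable Y) {R : ℝ} (hR : ∀ x, Y x ⬝ᵥ Y x ≤ R) (hR1 : 1 ≤ R)
    (hI : ∀ a b, ∫ x, Y x a * Y x b ∂μ = if a = b then 1 else 0) (n r : ℕ) (s : ℝ) (hs0 : 0 ≤ s)
    (hs : s ≤ (r+1) * R) :
    (Measure.pi fun _ : Fin n => μ) {X | ((r+1:ℝ) * R + s) ^ (r+1) ≤
      ((((r+1:ℝ) * R) • 1 + (1:ℝ) • ∑ i, vecMulVec (Y (X i)) (Y (X i))) ^ (r+1)).trace} ≤
      ENNReal.ofReal (Fintype.card ι * Real.exp (3 * (n / R) - s / (2 * R))) := by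
  set p : ℝ := (r + 1 : ℝ) with hp
  have hp1 : 1 ≤ p := by simp [hp]
  have hp0 : 0 < p := by linarith
  have hR0 : 0 < R := by linarith
  set T := p * R with hT
  set q := 1 + 1 / p with hq
  have hq0 : 1 ≤ q := by have : 0 < 1 / p := by positivity
                         linarith
  have hqr : q ^ r ≤ 2.72 := by
    have := q_pow_le (n := r+1) (by omega) r (by omega)
    push_cast at this
    exact this
  have hqr0 : 1 ≤ q ^ r := one_le_pow₀ hq0
  have hT0 : 0 < T := by positivity
  set ρ := 1 + p * q ^ r / T with hρd
  have hρe : p * q ^ r / T = q ^ r / R := by rw [hT]; field_simp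
  have hρ0 : 0 ≤ ρ := by positivity
  have key := iter μ Y hY 1 ρ hρ0 (r+1)
    (fun j A => A.IsHermitian ∧ LB A T) (by
      rintro j A ⟨h1, h2⟩ x
      exact ⟨herm_add h1 _ _, LB_add h2⟩) (by
      rintro j A ⟨h1, h2⟩
      exact upper_step μ Y hY hR hI A h1 (t := T) (q := q) hT0 h2 (by
          have : (q - 1) * T = R := by rw [hq, hT]; field_simp; ring
          linarith) (by linarith) r) n (T • 1) ⟨smul_one_herm _, smul_one_LB (ι := ι) T⟩
  rw [smul_one_tr] at key
  have hTa : 0 < T + s := by linarith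
  refine (markov _ _ (meas_tr hY _ _ _ _) (pow_pos hTa _) key).trans (ENNReal.ofReal_le_ofReal ?_)
  have e1 : ρ ≤ Real.exp (3 / R) := by
    have : q ^ r / R ≤ 3 / R := by gcongr; linarith
    have h2 := Real.add_one_le_exp (3 / R)
    rw [hρd, hρe]; linarith
  have e2 : T / (T + s) ≤ Real.exp (- (s / (2 * T))) := by
    rw [Real.exp_neg, div_le_iff₀ hTa, ← div_eq_inv_mul, le_div_iff₀ (Real.exp_pos _)]
    have hx0 : 0 ≤ s / (2 * T) := by positivity
    have hx1 : s / (2 * T) ≤ 1/2 := by rw [div_le_iff₀ (by positivity)]; linarith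
    have h5 : Real.exp (s / (2*T)) ≤ 1 + 2 * (s / (2 * T)) := by
      have := Real.abs_exp_sub_one_le (x := s / (2*T)) (by rw [abs_of_nonneg hx0]; linarith)
      rw [abs_of_nonneg hx0] at this
      linarith [le_abs_self (Real.exp (s / (2*T)) - 1)]
    calc T * Real.exp (s / (2*T)) ≤ T * (1 + 2 * (s / (2 * T))) := by gcongr
      _ = _ := by field_simp
  clear_value ρ T
  calc ρ ^ n * (Fintype.card ι * T ^ (r+1)) / (T + s) ^ (r+1) =
      Fintype.card ι * (ρ ^ n * (T / (T + s)) ^ (r+1)) := by rw [div_pow]; ring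
    _ ≤ Fintype.card ι * (Real.exp (3 / R) ^ n * (Real.exp (- (s / (2 * T)))) ^ (r+1)) := by gcongr
    _ = _ := by
      rw [← Real.exp_nat_mul, ← Real.exp_nat_mul, ← Real.exp_add]; congr 2; push_cast; rw [← hp, hT]; field_simp; ring
end prob

end helpers

lemma LB_gram {ι : Type*} [Fintype ι] [DecidableEq ι] {n : ℕ} (v : Fin n → ι → ℝ) (R : ℝ) (hR : ∀ i, v i ⬝ᵥ v i ≤ R) :
    (∑ i, vecMulVec (v i) (v i)).IsHermitian ∧
    LB (∑ i, vecMulVec (v i) (v i)) 0 ∧ UB (∑ i, vecMulVec (v i) (v i)) (n * R) := by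
  have e : ∀ x, x ⬝ᵥ ((∑ i, vecMulVec (v i) (v i)) *ᵥ x) = ∑ i, (x ⬝ᵥ v i) ^ 2 := by
    intro x
    rw [Matrix.sum_mulVec, dotProduct_sum]
    exact Finset.sum_congr rfl fun i _ => quad_vv x (v i)
  refine ⟨?_, fun x => ?_, fun x => ?_⟩
  · unfold Matrix.IsHermitian
    rw [conjTranspose_sum]
    exact Finset.sum_congr rfl fun i _ => herm_vv (v i)
  · rw [e, zero_mul]
    exact Finset.sum_nonneg fun _ _ => sq_nonneg _
  · rw [e]
    calc _ ≤ ∑ i : Fin n, R * (x ⬝ᵥ x) := Finset.sum_le_sum fun i _ => (cs x (v i)).trans (by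
            rw [mul_comm]; exact mul_le_mul_of_nonneg_right (hR i) (self_nonneg x))
      _ = _ := by simp [mul_assoc]

lemma eig_facts {k : ℕ} (hk : 1 ≤ k) (S : Matrix (Fin k) (Fin k) ℝ) (hS : S.IsHermitian) :
    (∃ i, eigval S k = hS.eigenvalues i) ∧ (∃ i, eigval S 1 = hS.eigenvalues i) ∧ eigval S k ≤ eigval S 1 := by
  have h1 : (1:ℕ) - 1 < k := by omega
  have h2 : k - 1 < k := by omega
  unfold eigval
  simp only [dif_pos hS, dif_pos h1, dif_pos h2]
  refine ⟨⟨_, rfl⟩, ⟨_, rfl⟩, ?_⟩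
  apply Tuple.monotone_sort
  rw [Fin.rev_le_rev]
  simp [Fin.le_def]

lemma eig_bounds {ι : Type*} [Fintype ι] [DecidableEq ι] (S : Matrix ι ι ℝ) (hS : S.IsHermitian) {lo hi : ℝ}
    (h1 : LB S lo) (h2 : UB S hi) (i : ι) : lo ≤ hS.eigenvalues i ∧ hS.eigenvalues i ≤ hi := by
  obtain ⟨w, -, -, hx⟩ := spec S hS
  obtain ⟨x, e1, e2⟩ := hx i
  have := h1 x
  have := h2 x
  rw [e1, e2] at *
  constructor <;> linarith

lemma eig_lower {ι : Type*} [Fintype ι] [DecidableEq ι] (S : Matrix ι ι ℝ) (hS : S.IsHermitian) {T a : ℝ} {p : ℕ}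
    (hT : ∀ i, hS.eigenvalues i ≤ T) (ha : a ≤ T) (h : ((T • 1 + (-1:ℝ) • S) ^ p).trace < (T - a) ^ p) (i : ι) :
    a ≤ hS.eigenvalues i := by
  obtain ⟨w, -, ht, -⟩ := spec S hS
  rw [ht] at h
  have h1 := Finset.single_le_sum (f := fun i => (T + -1 * hS.eigenvalues i) ^ p)
    (fun j _ => pow_nonneg (by linarith [hT j]) p) (Finset.mem_univ i)
  have := lt_of_pow_lt_pow_left₀ p (by linarith) (h1.trans_lt h)
  linarith

lemma eig_upper {ι : Type*} [Fintype ι] [DecidableEq ι] (S : Matrix ι ι ℝ) (hS : S.IsHermitian) {T s : ℝ} {p : ℕ}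
    (h0 : ∀ i, 0 ≤ hS.eigenvalues i) (hT : 0 ≤ T) (hs : 0 ≤ s)
    (h : ((T • 1 + (1:ℝ) • S) ^ p).trace < (T + s) ^ p) (i : ι) :
    hS.eigenvalues i ≤ s := by
  obtain ⟨w, -, ht, -⟩ := spec S hS
  rw [ht] at h
  have h1 := Finset.single_le_sum (f := fun i => (T + 1 * hS.eigenvalues i) ^ p)
    (fun j _ => pow_nonneg (by linarith [h0 j]) p) (Finset.mem_univ i)
  have := lt_of_pow_lt_pow_left₀ p (by linarith) (h1.trans_lt h)
  linarith

lemma gram_eq {𝒳 : Type*} (ψ : ℕ → 𝒳 → ℝ) (k n : ℕ) (X : Fin n → 𝒳) :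
    (psiMat ψ k X)ᵀ * psiMat ψ k X =
      ∑ i, vecMulVec (fun a : Fin k => ψ a (X i)) (fun a : Fin k => ψ a (X i)) := by
  ext a b
  simp [psiMat, Matrix.mul_apply, Matrix.sum_apply, vecMulVec_apply]

lemma eig_sure {𝒳 : Type*} (ψ : ℕ → 𝒳 → ℝ) (k n : ℕ) (hk : 1 ≤ k) (X : Fin n → 𝒳) :
    0 ≤ eigval ((psiMat ψ k X)ᵀ * psiMat ψ k X) k ∧
    eigval ((psiMat ψ k X)ᵀ * psiMat ψ k X) k ≤ eigval ((psiMat ψ k X)ᵀ * psiMat ψ k X) 1 := by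
  rw [gram_eq]
  set v : Fin n → Fin k → ℝ := fun i a => ψ a (X i)
  obtain ⟨h1, h2, h3⟩ := LB_gram v (∑ i, v i ⬝ᵥ v i)
    (fun i => Finset.single_le_sum (f := fun i => v i ⬝ᵥ v i) (fun j _ => self_nonneg _) (Finset.mem_univ i))
  obtain ⟨⟨i, hi⟩, -, h⟩ := eig_facts hk _ h1
  exact ⟨by rw [hi]; exact (eig_bounds _ h1 h2 h3 i).1, h⟩

lemma core {𝒳 : Type*} [MeasurableSpace 𝒳] (μ : Measure 𝒳) [IsProbabilityMeasure μ]
    (ψ : ℕ → 𝒳 → ℝ) (hψ : OrthonormalFamily μ ψ) (n k : ℕ) (hk : 1 ≤ k) (hn : 1 ≤ n) (R : ℝ) (hR1 : 1 ≤ R)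
    (hR : ∀ᵐ x ∂μ, ∑ i ∈ Finset.range k, (ψ i x) ^ 2 ≤ R) :
    iid μ n {X | ¬ ((n:ℝ) / 10 ≤ eigval ((psiMat ψ k X)ᵀ * psiMat ψ k X) k)} ≤
      ENNReal.ofReal (k * Real.exp (-(0.1 * ((n:ℝ) / R)))) ∧
    ∀ s, 0 ≤ s → iid μ n {X | ¬ (eigval ((psiMat ψ k X)ᵀ * psiMat ψ k X) 1 ≤ s)} ≤
      ENNReal.ofReal (k * Real.exp (3 * ((n:ℝ) / R) - s / (2 * R))) := by
  have hsm : ∀ i, AEStronglyMeasurable (ψ i) μ := fun i => (hψ.1 i).1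
  set φ : ℕ → 𝒳 → ℝ := fun i => (hsm i).mk (ψ i) with hφ
  have hφm : ∀ i, Measurable (φ i) := fun i => (hsm i).stronglyMeasurable_mk.measurable
  have hφe : ∀ᵐ x ∂μ, ∀ i, ψ i x = φ i x := ae_all_iff.2 fun i => (hsm i).ae_eq_mk
  set Y : 𝒳 → Fin k → ℝ := fun x => if ∑ i ∈ Finset.range k, (φ i x) ^ 2 ≤ R then (fun a => φ a x) else 0 with hYd
  have hYm : Measurable Y := by
    refine Measurable.ite (measurableSet_le (Finset.measurable_sum _ fun i _ => (hφm i).pow_const 2) measurable_const) ?_ measurable_const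
    exact measurable_pi_lambda _ fun a => hφm a
  have hYR : ∀ x, Y x ⬝ᵥ Y x ≤ R := by
    intro x
    simp only [hYd]
    split_ifs with h
    · rw [Finset.sum_range] at h
      simpa [dotProduct, ← sq] using h
    · simp; linarith
  have hYe : ∀ᵐ x ∂μ, Y x = fun a : Fin k => ψ a x := by
    filter_upwards [hφe, hR] with x h1 h2
    simp only [h1] at h2 ⊢
    simp [hYd, h2]
  have hI : ∀ a b, ∫ x, Y x a * Y x b ∂μ = if a = b then 1 else 0 := by
    intro a b
    have : ∫ x, Y x a * Y x b ∂μ = ∫ x, ψ a x * ψ b x ∂μ := integral_congr_ae (by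
      filter_upwards [hYe] with x hx; rw [hx])
    rw [this, hψ.2]
    simp [Fin.ext_iff]
  have hpi : ∀ᵐ X ∂(iid μ n), (psiMat ψ k X)ᵀ * psiMat ψ k X = ∑ i, vecMulVec (Y (X i)) (Y (X i)) := by
    have : ∀ᵐ X ∂(iid μ n), ∀ i, Y (X i) = fun a : Fin k => ψ a (X i) := by
      refine ae_all_iff.2 fun i => ?_
      have h := (Measure.tendsto_eval_ae_ae (μ := fun _ : Fin n => μ) (i := i)).eventually hYe
      exact h
    filter_upwards [this] with X hX
    rw [gram_eq]
    exact Finset.sum_congr rfl fun i _ => by rw [hX i]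
  have hR0 : 0 < R := by linarith
  constructor
  · obtain ⟨r, rfl⟩ : ∃ r, n = r + 1 := ⟨n - 1, by omega⟩
    have := lower_tail μ Y hYm hYR hR1 hI r
    rw [Fintype.card_fin] at this
    push_cast
    refine le_trans (measure_mono_ae ?_) this
    filter_upwards [hpi] with X hX hbad
    by_contra hc
    apply hbad
    change ¬ (_ ≤ _) at hc
    rw [hX]
    obtain ⟨h1, h2, h3⟩ := LB_gram (fun i => Y (X i)) R (fun i => hYR _)
    obtain ⟨⟨i, hi⟩, -, -⟩ := eig_facts hk _ h1
    rw [hi]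
    have hr : (0:ℝ) ≤ r := Nat.cast_nonneg r
    have hnn : (r + 1 : ℝ) ≤ (r+1) * R := by nlinarith
    refine eig_lower _ h1 (T := 2 * (r+1:ℝ) * R) (p := r+1) (fun j => ?_) ?_ (not_le.1 hc) i
    · have := (eig_bounds _ h1 h2 h3 j).2
      push_cast at this
      linarith
    · linarith
  · intro s hs
    obtain ⟨r, hr⟩ := exists_nat_ge (s / R)
    have hs' : s ≤ (r + 1) * R := by
      rw [div_le_iff₀ hR0] at hr
      linarith
    have := upper_tail μ Y hYm hYR hR1 hI n r s hs hs'
    rw [Fintype.card_fin] at this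
    refine le_trans (measure_mono_ae ?_) this
    filter_upwards [hpi] with X hX hbad
    by_contra hc
    apply hbad
    change ¬ (_ ≤ _) at hc
    rw [hX]
    obtain ⟨h1, h2, h3⟩ := LB_gram (fun i => Y (X i)) R (fun i => hYR _)
    obtain ⟨-, ⟨i, hi⟩, -⟩ := eig_facts hk _ h1
    rw [hi]
    exact eig_upper _ h1 (T := (r+1:ℝ) * R) (p := r+1) (fun j => (eig_bounds _ h1 h2 h3 j).1) (by positivity) hs (not_le.1 hc) i

lemma beta_facts {𝒳 : Type*} [MeasurableSpace 𝒳] (μ : Measure 𝒳) [IsProbabilityMeasure μ] (lam : ℕ → ℝ)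
    (ψ : ℕ → 𝒳 → ℝ) (hψ : OrthonormalFamily μ ψ) (k : ℕ) (hk : 1 ≤ k) (hb : BetaFinite μ lam ψ k) :
    1 ≤ betaQ μ lam ψ k ∧ ∀ᵐ x ∂μ, ∑ i ∈ Finset.range k, (ψ i x) ^ 2 ≤ betaQ μ lam ψ k * k := by
  have hk0 : (0:ℝ) < k := by exact_mod_cast hk
  obtain ⟨C, hC⟩ := hb
  have h1 : ∀ᵐ x ∂μ, betaF lam ψ k x ≤ betaQ μ lam ψ k := by
    apply ae_le_essSup
    exact ⟨C, by simpa [Filter.eventually_map] using hC⟩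
  have h2 : ∀ᵐ x ∂μ, ∑ i ∈ Finset.range k, (ψ i x) ^ 2 ≤ betaQ μ lam ψ k * k := by
    filter_upwards [h1] with x hx
    rw [← div_le_iff₀ hk0]
    exact ((le_max_left _ _).trans (le_max_left _ _)).trans hx
  refine ⟨?_, h2⟩
  have hi : ∀ i, Integrable (fun x => (ψ i x) ^ 2) μ := fun i => (hψ.1 i).integrable_sq
  have h3 : ∫ x, ∑ i ∈ Finset.range k, (ψ i x) ^ 2 ∂μ = k := by
    rw [integral_finsetSum _ fun i _ => hi i]
    have : ∀ i, ∫ x, (ψ i x) ^ 2 ∂μ = 1 := fun i => by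
      have := hψ.2 i i
      simpa [sq] using this
    simp [this]
  have h4 := integral_mono_ae (integrable_finsetSum _ fun i _ => hi i) (integrable_const _) h2
  rw [h3] at h4
  simp at h4
  nlinarith

lemma finish {Ω : Type*} [MeasurableSpace Ω] (ν : Measure Ω) [IsProbabilityMeasure ν] (G B1 B2 : Set Ω) (e : ℝ)
    (he : 0 ≤ e) (h1 : ν B1 ≤ ENNReal.ofReal e) (h2 : ν B2 ≤ ENNReal.ofReal e) (h : ∀ x, x ∉ B1 → x ∉ B2 → x ∈ G) :
    ENNReal.ofReal (1 - 2 * e) ≤ ν G := by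
  rw [ENNReal.ofReal_sub _ (by positivity), tsub_le_iff_right]
  calc ENNReal.ofReal 1 = ν Set.univ := by simp
    _ ≤ ν (G ∪ (B1 ∪ B2)) := measure_mono fun x _ => by
        by_cases hx1 : x ∈ B1
        · exact Or.inr (Or.inl hx1)
        · by_cases hx2 : x ∈ B2
          · exact Or.inr (Or.inr hx2)
          · exact Or.inl (h x hx1 hx2)
    _ ≤ ν G + (ν B1 + ν B2) := (measure_union_le _ _).trans (add_le_add le_rfl (measure_union_le _ _))
    _ ≤ ν G + (ENNReal.ofReal e + ENNReal.ofReal e) := by gcongr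
    _ = _ := by rw [← ENNReal.ofReal_add he he, two_mul]

lemma k_exp {k : ℕ} (hk : 1 ≤ k) {x y : ℝ} (h : Real.log k + x ≤ y) : k * Real.exp x ≤ Real.exp y := by
  have hk0 : (0:ℝ) < k := by exact_mod_cast hk
  rw [← Real.exp_log hk0, ← Real.exp_add]
  exact Real.exp_le_exp.2 h

theorem singular_value_concentration :
    ∃ c' : ℝ, 0 < c' ∧ ∃ c₂ : ℝ, 0 < c₂ ∧
      ((∀ (𝒳 : Type u) [MeasurableSpace 𝒳] (μ : Measure 𝒳) [IsProbabilityMeasure μ]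
          (lam : ℕ → ℝ) (ψ : ℕ → 𝒳 → ℝ),
          (∀ i, 0 ≤ lam i) → Summable lam → OrthonormalFamily μ ψ →
          ∀ n k : ℕ, 1 ≤ k → k ≤ n → BetaFinite μ lam ψ k →
            ENNReal.ofReal
                (1 - 2 * Real.exp (-(c' / betaQ μ lam ψ k) *
                  max ((n : ℝ) / (k : ℝ)) (Real.log k))) ≤
              iid μ n {X : Fin n → 𝒳 |
                (max (Real.sqrt n -
                      Real.sqrt ((1 / 2 : ℝ) *
                        max (n : ℝ) (betaQ μ lam ψ k * (1 + 1 / c') * (k : ℝ) * Real.log k)))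
                    0) ^ 2 ≤
                  eigval ((psiMat ψ k X)ᵀ * psiMat ψ k X) k ∧
                eigval ((psiMat ψ k X)ᵀ * psiMat ψ k X) 1 ≤
                  c₂ * max (n : ℝ) (betaQ μ lam ψ k * (k : ℝ) * Real.log k)}) ∧
        ∃ c : ℝ, 0 < c ∧ ∃ c₁ : ℝ, 0 < c₁ ∧
          ∀ (𝒳 : Type u) [MeasurableSpace 𝒳] (μ : Measure 𝒳) [IsProbabilityMeasure μ]
            (lam : ℕ → ℝ) (ψ : ℕ → 𝒳 → ℝ),
            (∀ i, 0 ≤ lam i) → Summable lam → OrthonormalFamily μ ψ →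
            ∀ n k : ℕ, 1 ≤ k → k ≤ n → BetaFinite μ lam ψ k →
              c * betaQ μ lam ψ k * (k : ℝ) * Real.log k ≤ (n : ℝ) →
              ENNReal.ofReal
                  (1 - 2 * Real.exp (-(c' / betaQ μ lam ψ k) * ((n : ℝ) / (k : ℝ)))) ≤
                iid μ n {X : Fin n → 𝒳 |
                  c₁ * (n : ℝ) ≤ eigval ((psiMat ψ k X)ᵀ * psiMat ψ k X) k ∧
                  eigval ((psiMat ψ k X)ᵀ * psiMat ψ k X) k ≤
                    eigval ((psiMat ψ k X)ᵀ * psiMat ψ k X) 1 ∧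
                  eigval ((psiMat ψ k X)ᵀ * psiMat ψ k X) 1 ≤ c₂ * (n : ℝ)}) := by
  refine ⟨1/100, by norm_num, 10, by norm_num, ?_, 50, by norm_num, 1/10, by norm_num, ?_⟩
  · intro 𝒳 _ μ _ lam ψ _ _ hψ n k hk hkn hb
    obtain ⟨hβ, hR⟩ := beta_facts μ lam ψ hψ k hk hb
    set β := betaQ μ lam ψ k
    have hk1 : (1:ℝ) ≤ k := by exact_mod_cast hk
    have hn1 : (1:ℝ) ≤ n := by exact_mod_cast hk.trans hkn
    have hβ0 : 0 < β := by linarith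
    have hk0 : (0:ℝ) < k := by linarith
    have hRR : 1 ≤ β * k := by nlinarith
    have hR0 : 0 < β * k := by positivity
    have hlog : 0 ≤ Real.log k := Real.log_nonneg hk1
    obtain ⟨c1, c2⟩ := core μ ψ hψ n k hk (hk.trans hkn) (β * k) hRR hR
    haveI : IsProbabilityMeasure (iid μ n) := by unfold iid; infer_instance
    have hdiv : (n:ℝ) / k = β * (n / (β * k)) := by field_simp
    have hsq : Real.sqrt n ^ 2 = n := Real.sq_sqrt (by linarith)
    set N := max (n:ℝ) (β * k * Real.log k) with hN
    have hNn : (n:ℝ) ≤ N := le_max_left _ _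
    have hNl : β * k * Real.log k ≤ N := le_max_right _ _
    have hNl' : Real.log k ≤ N / (β * k) := by rw [le_div_iff₀ hR0]; linarith
    have hNn' : (n:ℝ) / (β * k) ≤ N / (β * k) := by gcongr
    have hN0 : 0 ≤ N / (β * k) := by positivity
    -- upper tail
    have u := c2 (10 * N) (by positivity)
    have hu : (k:ℝ) * Real.exp (3 * ((n:ℝ) / (β * k)) - 10 * N / (2 * (β * k))) ≤
        Real.exp (-(1/100 / β) * max ((n:ℝ)/k) (Real.log k)) := by
      apply k_exp hk
      have e1 : 10 * N / (2 * (β * k)) = 5 * (N / (β * k)) := by field_simp; linarith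
      have e2 : (1/100 / β) * max ((n:ℝ)/k) (Real.log k) ≤ N / (β * k) := by
        have : max ((n:ℝ)/k) (Real.log k) ≤ β * (N / (β * k)) := by
          refine max_le ?_ ?_
          · rw [hdiv]; gcongr
          · nlinarith
        calc _ ≤ (1/100 / β) * (β * (N / (β * k))) := by gcongr
          _ = (1/100) * (N / (β * k)) := by field_simp
          _ ≤ _ := by linarith
      rw [e1]
      linarith
    by_cases hc : (n:ℝ) ≤ 50 * (β * k * Real.log k)
    ·
      refine finish (iid μ n) _ _ ∅ _ (Real.exp_pos _).le (u.trans (ENNReal.ofReal_le_ofReal hu)) (by simp) ?_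
      intro X hX _
      simp only [Set.mem_setOf_eq, not_not] at hX ⊢
      refine ⟨?_, hX⟩
      have : Real.sqrt n ≤ Real.sqrt ((1 / 2 : ℝ) * max (n : ℝ) (β * (1 + 1 / (1/100)) * (k : ℝ) * Real.log k)) := by
        apply Real.sqrt_le_sqrt
        have := le_max_right (n : ℝ) (β * (1 + 1 / (1/100)) * (k : ℝ) * Real.log k)
        have h0 : 0 ≤ β * k * Real.log k := by positivity
        have e : β * (1 + 1 / (1/100)) * (k : ℝ) * Real.log k = 101 * (β * k * Real.log k) := by ring
        rw [e] at this ⊢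
        linarith
      rw [max_eq_right (by linarith)]
      simpa using (eig_sure ψ k n hk X).1
    · have hc := not_le.1 hc
      have hl : 50 * Real.log k ≤ n / (β * k) := by rw [le_div_iff₀ hR0]; linarith
      have hl2 : (k:ℝ) * Real.exp (-(0.1 * ((n:ℝ) / (β * k)))) ≤
          Real.exp (-(1/100 / β) * max ((n:ℝ)/k) (Real.log k)) := by
        apply k_exp hk
        have : max ((n:ℝ)/k) (Real.log k) = n / k := by
          apply max_eq_left
          rw [hdiv]
          nlinarith
        rw [this, hdiv]
        have e : -(1/100 / β) * (β * ((n:ℝ) / (β * k))) = -(1/100 * (n / (β * k))) := by field_simp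
        rw [e]
        norm_num
        linarith
      refine finish (iid μ n) _ _ _ _ (Real.exp_pos _).le (u.trans (ENNReal.ofReal_le_ofReal hu))
        (c1.trans (ENNReal.ofReal_le_ofReal hl2)) ?_
      intro X hX hX2
      simp only [Set.mem_setOf_eq, not_not] at hX hX2 ⊢
      refine ⟨le_trans ?_ hX2, hX⟩
      have h7 : 0.7 * Real.sqrt n ≤ Real.sqrt ((1 / 2 : ℝ) * max (n : ℝ) (β * (1 + 1 / (1/100)) * (k : ℝ) * Real.log k)) := by
        apply Real.le_sqrt_of_sq_le
        have := le_max_left (n : ℝ) (β * (1 + 1 / (1/100)) * (k : ℝ) * Real.log k)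
        rw [mul_pow, hsq]
        have h49 : (0.7:ℝ) ^ 2 = 49 / 100 := by norm_num
        rw [h49]
        linarith
      have h8 : max (Real.sqrt n - Real.sqrt ((1 / 2 : ℝ) * max (n : ℝ) (β * (1 + 1 / (1/100)) * (k : ℝ) * Real.log k))) 0 ≤
          0.3 * Real.sqrt n := by
        have := Real.sqrt_nonneg (n:ℝ)
        refine max_le (by linarith) (by positivity)
      calc _ ≤ (0.3 * Real.sqrt n) ^ 2 := pow_le_pow_left₀ (le_max_right _ _) h8 2
        _ = 0.09 * n := by rw [mul_pow, hsq]; norm_num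
        _ ≤ _ := by linarith
  · intro 𝒳 _ μ _ lam ψ _ _ hψ n k hk hkn hb hc
    obtain ⟨hβ, hR⟩ := beta_facts μ lam ψ hψ k hk hb
    set β := betaQ μ lam ψ k
    have hk1 : (1:ℝ) ≤ k := by exact_mod_cast hk
    have hn1 : (1:ℝ) ≤ n := by exact_mod_cast hk.trans hkn
    have hβ0 : 0 < β := by linarith
    have hk0 : (0:ℝ) < k := by linarith
    have hRR : 1 ≤ β * k := by nlinarith
    have hR0 : 0 < β * k := by positivity
    have hlog : 0 ≤ Real.log k := Real.log_nonneg hk1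
    obtain ⟨c1, c2⟩ := core μ ψ hψ n k hk (hk.trans hkn) (β * k) hRR hR
    haveI : IsProbabilityMeasure (iid μ n) := by unfold iid; infer_instance
    have hl : 50 * Real.log k ≤ n / (β * k) := by rw [le_div_iff₀ hR0]; linarith
    have e : -(1/100 / β) * ((n:ℝ) / k) = -(1/100 * (n / (β * k))) := by field_simp
    have u := c2 (10 * n) (by positivity)
    rw [e]
    have hp : 0 ≤ (n:ℝ) / (β * k) := by positivity
    have hl2 : (k:ℝ) * Real.exp (-(0.1 * ((n:ℝ) / (β * k)))) ≤ Real.exp (-(1/100 * (n / (β * k)))) := by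
      apply k_exp hk
      norm_num
      linarith
    have hu : (k:ℝ) * Real.exp (3 * ((n:ℝ) / (β * k)) - 10 * n / (2 * (β * k))) ≤
        Real.exp (-(1/100 * (n / (β * k)))) := by
      apply k_exp hk
      have e1 : 10 * (n:ℝ) / (2 * (β * k)) = 5 * (n / (β * k)) := by field_simp; norm_num
      rw [e1]
      linarith
    refine finish (iid μ n) _ _ _ _ (Real.exp_pos _).le (u.trans (ENNReal.ofReal_le_ofReal hu))
      (c1.trans (ENNReal.ofReal_le_ofReal hl2)) ?_
    intro X hX hX2
    simp only [Set.mem_setOf_eq, not_not] at hX hX2 ⊢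
    exact ⟨by linarith, (eig_sure ψ k n hk X).2, hX⟩

end KRRPaper

end
end

section
/- Extension of Ostrowski's theorem to non-square matrices. Let n, k ≥ 1, let λ_1 ≥ λ_2 ≥ … ≥ λ_k > 0 be positive reals, let Ψ ∈ ℝ^{n×k} be any matrix, set D := (1/n)·Ψ·Ψ^⊤ ∈ ℝ^{n×n} and B := (1/n)·Ψ·diag(λ_1,…,λ_k)·Ψ^⊤ ∈ ℝ^{n×n}. Then for every i with 1 ≤ i ≤ min(k, n): λ_{i+k−min(n,k)}·μ_{min(n,k)}(D) ≤ μ_i(B) ≤ λ_i·μ₁(D). -/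
open MeasureTheory Matrix Filter

noncomputable section

namespace KRRPaper

universe u

variable {𝒳 : Type u}

/-- Few linear functionals have a common nonzero zero. -/
theorem exists_common_zero {n : ℕ} {ι : Type} [Fintype ι] (f : ι → (Fin n → ℝ) →ₗ[ℝ] ℝ)
    (h : Fintype.card ι < n) : ∃ x : Fin n → ℝ, x ≠ 0 ∧ ∀ a, f a x = 0 := by
  have hlt : Module.finrank ℝ (ι → ℝ) < Module.finrank ℝ (Fin n → ℝ) := by simpa using h
  have hb := LinearMap.ker_ne_bot_of_finrank_lt (f := LinearMap.pi f) hlt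
  obtain ⟨x, hx, hx0⟩ := Submodule.exists_mem_ne_zero_of_ne_bot hb
  exact ⟨x, hx0, fun a => congrFun (LinearMap.mem_ker.mp hx) a⟩

/-- Sorted spectral decomposition of the quadratic form. -/
theorem sorted_spectral {n : ℕ} (M : Matrix (Fin n) (Fin n) ℝ) (hM : M.IsHermitian) :
    ∃ c : Fin n → (Fin n → ℝ) →ₗ[ℝ] ℝ,
      (∀ x, x ⬝ᵥ x = ∑ j, (c j x) ^ 2) ∧
      (∀ x, x ⬝ᵥ (M *ᵥ x) = ∑ j : Fin n, eigval M (j + 1) * (c j x) ^ 2) ∧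
      (∀ a b : ℕ, 1 ≤ a → a ≤ b → b ≤ n → eigval M b ≤ eigval M a) := by
  classical
  have hev : ∀ j : Fin n, eigval M (j + 1) =
      hM.eigenvalues (Tuple.sort hM.eigenvalues (Fin.rev j)) := by
    intro j
    have hj : (j : ℕ) + 1 - 1 < n := by omega
    unfold eigval
    rw [dif_pos hM, dif_pos hj]
    rfl
  let b := hM.eigenvectorBasis
  let τ : Fin n ≃ Fin n := Fin.revPerm.trans (Tuple.sort hM.eigenvalues)
  have key : ∀ x y : Fin n → ℝ, x ⬝ᵥ y =
      ∑ j, (b j).ofLp ⬝ᵥ x * ((b j).ofLp ⬝ᵥ y) := by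
    intro x y
    have := b.sum_inner_mul_inner (WithLp.toLp 2 x) (WithLp.toLp 2 y)
    simp only [EuclideanSpace.inner_eq_star_dotProduct, star_trivial] at this
    rw [dotProduct_comm, ← this]
    refine Finset.sum_congr rfl fun j _ => ?_
    rw [dotProduct_comm y]
  have hMv : ∀ (x : Fin n → ℝ) j, (b j).ofLp ⬝ᵥ (M *ᵥ x) =
      hM.eigenvalues j * ((b j).ofLp ⬝ᵥ x) := by
    intro x j
    have hT : Mᵀ = M := by
      rw [← conjTranspose_eq_transpose_of_trivial]
      exact hM.eq
    rw [dotProduct_mulVec, ← mulVec_transpose, hT, hM.mulVec_eigenvectorBasis, smul_dotProduct,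
      smul_eq_mul]
  refine ⟨fun j => LinearMap.mk (AddHom.mk (fun x => (b (τ j)).ofLp ⬝ᵥ x)
    (fun x y => dotProduct_add _ _ _)) (fun r x => dotProduct_smul r (b (τ j)).ofLp x), ?_, ?_, ?_⟩
  · intro x
    rw [key, ← Equiv.sum_comp τ]
    exact Finset.sum_congr rfl fun j _ => (sq _).symm
  · intro x
    rw [key, ← Equiv.sum_comp τ]
    refine Finset.sum_congr rfl fun j _ => ?_
    rw [hev, hMv]
    change _ * (hM.eigenvalues (τ j) * _) = hM.eigenvalues (τ j) * ((b (τ j)).ofLp ⬝ᵥ x) ^ 2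
    ring
  · intro p q hp hpq hq
    have h1 := hev ⟨p - 1, by omega⟩
    have h2 := hev ⟨q - 1, by omega⟩
    simp only [Nat.sub_add_cancel hp, Nat.sub_add_cancel (hp.trans hpq)] at h1 h2
    rw [h1, h2]
    refine Tuple.monotone_sort hM.eigenvalues ?_
    rw [Fin.rev_le_rev]
    simp only [Fin.mk_le_mk]
    omega

theorem quad_form {n k : ℕ} (d : Fin k → ℝ) (Ψ : Matrix (Fin n) (Fin k) ℝ) (x : Fin n → ℝ) :
    x ⬝ᵥ (((n : ℝ)⁻¹ • (Ψ * Matrix.diagonal d * Ψᵀ)) *ᵥ x) =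
      (n : ℝ)⁻¹ * ∑ l, d l * ((Ψᵀ *ᵥ x) l) ^ 2 := by
  rw [smul_mulVec, dotProduct_smul, smul_eq_mul, ← mulVec_mulVec, ← mulVec_mulVec,
    dotProduct_mulVec, ← mulVec_transpose]
  congr 1
  simp only [dotProduct, mulVec_diagonal]
  exact Finset.sum_congr rfl fun l _ => by ring

theorem quad_herm {n k : ℕ} (d : Fin k → ℝ) (Ψ : Matrix (Fin n) (Fin k) ℝ) :
    ((n : ℝ)⁻¹ • (Ψ * Matrix.diagonal d * Ψᵀ)).IsHermitian := by
  rw [Matrix.IsHermitian, conjTranspose_eq_transpose_of_trivial, transpose_smul, transpose_mul,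
    transpose_mul, diagonal_transpose, transpose_transpose, Matrix.mul_assoc]

theorem ostrowski_extension (n k : ℕ) (hn : 1 ≤ n) (hk : 1 ≤ k) (lam : ℕ → ℝ)
    (hpos : ∀ i, i < k → 0 < lam i)
    (hmono : ∀ i j : ℕ, i ≤ j → j < k → lam j ≤ lam i)
    (Ψ : Matrix (Fin n) (Fin k) ℝ)
    (i : ℕ) (hi1 : 1 ≤ i) (hik : i ≤ min k n) :
    lam (i + k - min n k - 1) * eigval ((n : ℝ)⁻¹ • (Ψ * Ψᵀ)) (min n k) ≤
        eigval ((n : ℝ)⁻¹ • (Ψ * Matrix.diagonal (fun j : Fin k => lam j) * Ψᵀ)) i ∧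
      eigval ((n : ℝ)⁻¹ • (Ψ * Matrix.diagonal (fun j : Fin k => lam j) * Ψᵀ)) i ≤
        lam (i - 1) * eigval ((n : ℝ)⁻¹ • (Ψ * Ψᵀ)) 1 := by
  have hD1 : (n : ℝ)⁻¹ • (Ψ * Ψᵀ) =
      (n : ℝ)⁻¹ • (Ψ * Matrix.diagonal (fun _ : Fin k => (1 : ℝ)) * Ψᵀ) := by
    rw [Matrix.diagonal_one, Matrix.mul_one]
  have hDq := quad_form (fun _ : Fin k => (1 : ℝ)) Ψ
  have hDh := quad_herm (fun _ : Fin k => (1 : ℝ)) Ψ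
  rw [← hD1] at hDq hDh
  have hBq := quad_form (fun j : Fin k => lam j) Ψ
  have hBh := quad_herm (fun j : Fin k => lam j) Ψ
  set D := (n : ℝ)⁻¹ • (Ψ * Ψᵀ) with hD
  set B := (n : ℝ)⁻¹ • (Ψ * Matrix.diagonal (fun j : Fin k => lam j) * Ψᵀ) with hB
  obtain ⟨c, hc1, hc2, hc3⟩ := sorted_spectral D hDh
  obtain ⟨e, he1, he2, he3⟩ := sorted_spectral B hBh
  have hn0 : (0 : ℝ) ≤ (n : ℝ)⁻¹ := by positivity
  have hik1 : i ≤ k := hik.trans (min_le_left _ _)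
  have hin : i ≤ n := hik.trans (min_le_right _ _)
  let y : Fin k → (Fin n → ℝ) →ₗ[ℝ] ℝ := fun l => (LinearMap.proj l).comp (Matrix.mulVecLin Ψᵀ)
  have hy : ∀ l x, y l x = (Ψᵀ *ᵥ x) l := fun l x => rfl
  have hxpos : ∀ x : Fin n → ℝ, x ≠ 0 → 0 < x ⬝ᵥ x := by
    intro x hx
    have h0 : 0 ≤ x ⬝ᵥ x := by
      rw [hc1]; positivity
    exact lt_of_le_of_ne h0 (fun h => hx (dotProduct_self_eq_zero.mp h.symm))
  constructor
  · obtain ⟨m, hm⟩ : ∃ m, m = min n k := ⟨_, rfl⟩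
    rw [← hm]
    have hmn : m ≤ n := by omega
    have hmk : m ≤ k := by omega
    have him : i ≤ m := by omega
    obtain ⟨x, hx0, hx⟩ := exists_common_zero (n := n)
      (ι := Fin (n - m) ⊕ (Fin (m - i) ⊕ Fin (i - 1)))
      (Sum.elim (fun a => c ⟨m + a, by omega⟩)
        (Sum.elim (fun a => y ⟨i + k - m + a, by omega⟩) (fun a => e ⟨a, by omega⟩)))
      (by simp only [Fintype.card_sum, Fintype.card_fin]; omega)
    have hxc : ∀ j : Fin n, m ≤ (j : ℕ) → c j x = 0 := by
      intro j hj
      have := hx (Sum.inl ⟨j - m, by omega⟩)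
      simpa [Nat.add_sub_cancel' hj] using this
    have hxy : ∀ l : Fin k, i + k - m ≤ (l : ℕ) → (Ψᵀ *ᵥ x) l = 0 := by
      intro l hl
      have := hx (Sum.inr (Sum.inl ⟨l - (i + k - m), by omega⟩))
      simp only [Sum.elim_inr, Sum.elim_inl, Nat.add_sub_cancel' hl] at this
      exact this
    have hxe : ∀ j : Fin n, (j : ℕ) < i - 1 → e j x = 0 := by
      intro j hj
      exact hx (Sum.inr (Sum.inr ⟨j, hj⟩))
    have hl0 := hpos (i + k - m - 1) (by omega)
    have s1 : eigval D m * (x ⬝ᵥ x) ≤ x ⬝ᵥ (D *ᵥ x) := by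
      rw [hc1, hc2, Finset.mul_sum]
      refine Finset.sum_le_sum fun j _ => ?_
      by_cases hj : m ≤ (j : ℕ)
      · simp [hxc j hj]
      · exact mul_le_mul_of_nonneg_right (hc3 _ _ (by omega) (by omega) hmn) (sq_nonneg _)
    have s2 : lam (i + k - m - 1) * (x ⬝ᵥ (D *ᵥ x)) ≤ x ⬝ᵥ (B *ᵥ x) := by
      rw [hDq, hBq, mul_left_comm]
      refine mul_le_mul_of_nonneg_left ?_ hn0
      rw [Finset.mul_sum]
      refine Finset.sum_le_sum fun l _ => ?_
      by_cases hl : i + k - m ≤ (l : ℕ)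
      · simp [hxy l hl]
      · rw [one_mul]
        exact mul_le_mul_of_nonneg_right (hmono _ _ (by omega) (by omega)) (sq_nonneg _)
    have s3 : x ⬝ᵥ (B *ᵥ x) ≤ eigval B i * (x ⬝ᵥ x) := by
      rw [he1, he2, Finset.mul_sum]
      refine Finset.sum_le_sum fun j _ => ?_
      by_cases hj : (j : ℕ) < i - 1
      · simp [hxe j hj]
      · exact mul_le_mul_of_nonneg_right (he3 _ _ hi1 (by omega) (by omega)) (sq_nonneg _)
    refine le_of_mul_le_mul_right ?_ (hxpos x hx0)
    calc _ = lam (i + k - m - 1) * (eigval D m * (x ⬝ᵥ x)) := by ring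
      _ ≤ lam (i + k - m - 1) * (x ⬝ᵥ (D *ᵥ x)) := mul_le_mul_of_nonneg_left s1 hl0.le
      _ ≤ _ := s2.trans s3
  · obtain ⟨x, hx0, hx⟩ := exists_common_zero (n := n)
      (ι := Fin (i - 1) ⊕ Fin (n - i))
      (Sum.elim (fun a => y ⟨a, by omega⟩) (fun a => e ⟨i + a, by omega⟩))
      (by simp only [Fintype.card_sum, Fintype.card_fin]; omega)
    have hxy : ∀ l : Fin k, (l : ℕ) < i - 1 → (Ψᵀ *ᵥ x) l = 0 := by
      intro l hl
      exact hx (Sum.inl ⟨l, hl⟩)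
    have hxe : ∀ j : Fin n, i ≤ (j : ℕ) → e j x = 0 := by
      intro j hj
      have := hx (Sum.inr ⟨j - i, by omega⟩)
      simpa [Nat.add_sub_cancel' hj] using this
    have hl0 := hpos (i - 1) (by omega)
    have s1 : x ⬝ᵥ (D *ᵥ x) ≤ eigval D 1 * (x ⬝ᵥ x) := by
      rw [hc1, hc2, Finset.mul_sum]
      refine Finset.sum_le_sum fun j _ => ?_
      exact mul_le_mul_of_nonneg_right (hc3 _ _ le_rfl (by omega) (by omega)) (sq_nonneg _)
    have s2 : x ⬝ᵥ (B *ᵥ x) ≤ lam (i - 1) * (x ⬝ᵥ (D *ᵥ x)) := by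
      rw [hDq, hBq, mul_left_comm]
      refine mul_le_mul_of_nonneg_left ?_ hn0
      rw [Finset.mul_sum]
      refine Finset.sum_le_sum fun l _ => ?_
      by_cases hl : (l : ℕ) < i - 1
      · simp [hxy l hl]
      · rw [one_mul]
        exact mul_le_mul_of_nonneg_right (hmono _ _ (by omega) (by omega)) (sq_nonneg _)
    have s3 : eigval B i * (x ⬝ᵥ x) ≤ x ⬝ᵥ (B *ᵥ x) := by
      rw [he1, he2, Finset.mul_sum]
      refine Finset.sum_le_sum fun j _ => ?_
      by_cases hj : i ≤ (j : ℕ)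
      · simp [hxe j hj]
      · exact mul_le_mul_of_nonneg_right (he3 _ _ (by omega) (by omega) hin) (sq_nonneg _)
    refine le_of_mul_le_mul_right ?_ (hxpos x hx0)
    calc _ ≤ x ⬝ᵥ (B *ᵥ x) := s3
      _ ≤ lam (i - 1) * (x ⬝ᵥ (D *ᵥ x)) := s2
      _ ≤ lam (i - 1) * (eigval D 1 * (x ⬝ᵥ x)) := mul_le_mul_of_nonneg_left s1 hl0.le
      _ = _ := by ring

end KRRPaper

end
end
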